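/- arXiv:2405.16927 — 3 statements merged into one kernel-verified Lean document; each statement's English description precedes it below -/
import Mathlib

section
/- Let n be a real number with 0 < n < 3, and let c₀ > 0 and c₃ < 0. Then there exists a function A ∈ C²((0,∞), ℝ) with A(s) > 0 for all s > 0 satisfying 𝒟_{n/2}(𝒟_{n/2}A)(s) = c₀·A(s) + c₃·A(s)³ for all s > 0, such that the limit lim_{s→0⁺} s^{(n−2)/2} A(s) exists and is positive, A(s) → 0 as s → ∞, and sup_{s ≥ 1} s^{n/2} e^{√(c₀)·s} A(s) < ∞. (Forward-bounded localised solution of the nonautonomous real Ginzburg–Landau equation.) -/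
/-!
Write `A s = s ^ (-n/2) * w s`. Since `𝒟_k (r ^ (-k) * u) = r ^ (-k) * u'`, the equation becomes
`w'' = a² w - β s ^ (-n) w³` with `a = √c₀`, `β = -c₃`, and the behaviour wanted at the two ends
says that `w` vanishes linearly at `0` and decays like `exp (-a s)`.

Existence is variational. With `k_s = 1_{(0, s]} exp (-a (s - ·))` in `L²(ℝ)`, the inner products
`⟪k_s, k_t⟫` are the Dirichlet Green function `G` of `-d²/ds² + a²` on the half-line, so the
functions `s ↦ ⟪k_s, f⟫`, `f ∈ L²`, play the role of `H¹₀(0, ∞)`. The functional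
`J f = ∫₀^∞ t ^ (-n) ⟪k_t, f⟫⁴ dt` is sequentially weakly continuous on the unit ball: near `0` one
has `⟪k_t, f⟫⁴ ≤ t²`, which makes the weight integrable because `n < 3`, and near infinity the
weight tends to `0` because `n > 0`. By Banach–Alaoglu `J` has a maximiser. Testing Young's
inequality `u³ v ≤ 3/4 u⁴ + 1/4 v⁴` against the maximality shows that `v ↦ ∫ ρ u³ ⟪k, v⟫` has norm
at most `M = J f`, where `ρ` is the weight and `u = ⟪k, f⟫`; its Riesz representative is therefore
`M f`, which is the Euler–Lagrange equation. Using `|u|` in place of `u` gives a nonnegative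
extremal. After rescaling, `w s = ∫₀^∞ G(s, t) β t ^ (-n) w(t)³ dt` with `w > 0`
(`exists_integral_solution`).

Splitting the integral at `t = s` gives `a w = exp (-a s) P + sinh (a s) Q` with `P, Q ≥ 0`, from
which the differential equation and the estimates are read off.
* At infinity, `exp (a s) w` is nondecreasing with derivative `exp (2 a s) Q`. For large `s` one has
  `w'' ≥ (a/2)² w`, so boundedness of `w` forces `w = O(exp (-a s / 2))`; the cubic source term in
  `Q` then makes that derivative integrable (`exp_mul_bounded_of_split`).
* At the origin, `p = w / s` satisfies `-C s ^ (2 - n) p ≤ p' ≤ a p`. As `2 - n > -1`, the function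
  `p` times an integrating factor tending to `1` is nondecreasing, so `p` converges, and
  `exp (-a s) p` is nonincreasing, so its limit is positive (`tendsto_div_of_split`).
-/

open Filter

/-- The `k`-index Bessel operator `𝒟_k u = u' + (k/r)u`. -/
noncomputable def besselOp (k : ℝ) (u : ℝ → ℝ) : ℝ → ℝ :=
  fun r => deriv u r + (k / r) * u r

section
open MeasureTheory Set Topology

/-! ### A quartic variational problem in Hilbert space -/

/-- A functional bounded above and sequentially weakly continuous on the unit ball of a separable
Hilbert space attains its maximum there. Separability makes the dual ball weak-* sequentially
compact. -/
theorem exists_maximiser_unitBall {H : Type*} [NormedAddCommGroup H] [InnerProductSpace ℝ H]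
    [CompleteSpace H] [TopologicalSpace.SeparableSpace H] (J : H → ℝ) (C : ℝ)
    (hC : ∀ f, ‖f‖ ≤ 1 → J f ≤ C)
    (hJ : ∀ (F : ℕ → H) (f : H), (∀ j, ‖F j‖ ≤ 1) → ‖f‖ ≤ 1 →
      (∀ v, Tendsto (fun j => inner ℝ v (F j)) atTop (𝓝 (inner ℝ v f))) →
      Tendsto (fun j => J (F j)) atTop (𝓝 (J f))) :
    ∃ f, ‖f‖ ≤ 1 ∧ ∀ v, ‖v‖ ≤ 1 → J v ≤ J f := by
  set S : Set ℝ := J '' {f | ‖f‖ ≤ 1} with hS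
  have hne : S.Nonempty := ⟨J 0, 0, by simp, rfl⟩
  have hbdd : BddAbove S := ⟨C, by rintro _ ⟨f, hf, rfl⟩; exact hC f hf⟩
  obtain ⟨y, -, hy, hyS⟩ := exists_seq_tendsto_sSup hne hbdd
  choose F hF hFy using hyS
  have hmem : ∀ j, StrongDual.toWeakDual (InnerProductSpace.toDual ℝ H (F j)) ∈
      (WeakDual.toStrongDual ⁻¹' Metric.closedBall (0 : StrongDual ℝ H) 1 :
        Set (WeakDual ℝ H)) := by
    intro j
    simpa using hF j
  obtain ⟨φ, hφ, e, he, hlim⟩ := WeakDual.isSeqCompact_closedBall (𝕜 := ℝ) (E := H) 0 1 hmem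
  set f := (InnerProductSpace.toDual ℝ H).symm (WeakDual.toStrongDual φ) with hf
  have hf1 : ‖f‖ ≤ 1 := by
    rw [hf, LinearIsometryEquiv.norm_map]
    simpa using hφ
  have hw : ∀ v, Tendsto (fun j => inner ℝ v (F (e j))) atTop (𝓝 (inner ℝ v f)) := by
    intro v
    have h1 := ((WeakDual.eval_continuous v).tendsto φ).comp hlim
    have h2 : inner ℝ v f = φ v := by
      rw [real_inner_comm, hf, InnerProductSpace.toDual_symm_apply]; rfl
    rw [h2]
    refine h1.congr fun j => ?_
    simp [real_inner_comm]
  have h3 := hJ (fun j => F (e j)) f (fun j => hF _) hf1 hw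
  have h4 : Tendsto (fun j => J (F (e j))) atTop (𝓝 (sSup S)) := by
    refine (hy.comp he.tendsto_atTop).congr fun j => ?_
    simp [hFy]
  refine ⟨f, hf1, fun v hv => ?_⟩
  rw [tendsto_nhds_unique h3 h4]
  exact le_csSup hbdd ⟨v, hv, rfl⟩

/-- If `f` maximises `∫ ρ ⟪k, ·⟫⁴` over the unit ball, with maximum `M`, then `∫ ρ u³ ⟪k, ·⟫` is
represented by a vector of norm at most `M`, for every `u` with `|u| = |⟪k, f⟫|`. The bound follows
from Young's inequality and maximality. The two choices `u = ⟪k, f⟫` and `u = |⟪k, f⟫|` give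
the Euler–Lagrange equation and a nonnegative competitor, respectively. -/
theorem exists_riesz_cube {H X : Type*} [NormedAddCommGroup H] [InnerProductSpace ℝ H]
    [CompleteSpace H] [MeasurableSpace X] (μ : Measure X) (ρ : X → ℝ) (k : X → H)
    (hρ : ∀ᵐ x ∂μ, 0 ≤ ρ x) (hρm : AEStronglyMeasurable ρ μ)
    (hkm : ∀ f, AEStronglyMeasurable (fun x => inner ℝ (k x) f) μ)
    (hinteg : ∀ f, Integrable (fun x => ρ x * inner ℝ (k x) f ^ 4) μ)
    (f : H) (hmax : ∀ v, ‖v‖ ≤ 1 →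
      ∫ x, ρ x * inner ℝ (k x) v ^ 4 ∂μ ≤ ∫ x, ρ x * inner ℝ (k x) f ^ 4 ∂μ)
    (u : X → ℝ) (hum : AEStronglyMeasurable u μ) (hu : ∀ x, |u x| = |inner ℝ (k x) f|) :
    ∃ g : H, ‖g‖ ≤ ∫ x, ρ x * inner ℝ (k x) f ^ 4 ∂μ ∧
      ∀ v, Integrable (fun x => ρ x * u x ^ 3 * inner ℝ (k x) v) μ ∧
        inner ℝ g v = ∫ x, ρ x * u x ^ 3 * inner ℝ (k x) v ∂μ := by
  set M := ∫ x, ρ x * inner ℝ (k x) f ^ 4 ∂μ with hM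
  have hu4 : ∀ x, u x ^ 4 = inner ℝ (k x) f ^ 4 := fun x => by
    rw [← Even.pow_abs (by decide) (u x), hu, Even.pow_abs (by decide)]
  have young : ∀ a b : ℝ, a ^ 3 * b ≤ 3 / 4 * a ^ 4 + 1 / 4 * b ^ 4 := fun a b => by
    nlinarith [mul_nonneg (sq_nonneg (a - b)) (sq_nonneg (a + b)), sq_nonneg (a - b),
      mul_nonneg (sq_nonneg (a - b)) (sq_nonneg a), mul_nonneg (sq_nonneg (a - b)) (sq_nonneg b)]
  have hI : ∀ v, Integrable (fun x => ρ x * u x ^ 3 * inner ℝ (k x) v) μ := by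
    intro v
    refine ((hinteg f).add (hinteg v)).mono' ((hρm.mul (hum.pow 3)).mul (hkm v)) ?_
    filter_upwards [hρ] with x hx
    simp only [Pi.add_apply]
    have h1 := young (u x) (inner ℝ (k x) v)
    have h2 := young (u x) (-inner ℝ (k x) v)
    have h3 : |u x ^ 3 * inner ℝ (k x) v| ≤ u x ^ 4 + inner ℝ (k x) v ^ 4 := by
      rw [abs_le]
      constructor <;> nlinarith [sq_nonneg (u x ^ 2), sq_nonneg (inner ℝ (k x) v ^ 2)]
    rw [Real.norm_eq_abs, mul_assoc, abs_mul, abs_of_nonneg hx, ← hu4, ← mul_add]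
    exact mul_le_mul_of_nonneg_left h3 hx
  let Λ : H →ₗ[ℝ] ℝ :=
    { toFun := fun v => ∫ x, ρ x * u x ^ 3 * inner ℝ (k x) v ∂μ
      map_add' := fun v w => by
        rw [← integral_add (hI v) (hI w)]
        simp only [inner_add_right, mul_add]
      map_smul' := fun c v => by
        simp only [inner_smul_right, RingHom.id_apply, smul_eq_mul]
        rw [← integral_const_mul]
        congr 1; ext x; ring }
  have hball : ∀ v, ‖v‖ ≤ 1 → Λ v ≤ M := by
    intro v hv
    have h1 : Λ v ≤ ∫ x, (3 / 4 * (ρ x * inner ℝ (k x) f ^ 4) +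
        1 / 4 * (ρ x * inner ℝ (k x) v ^ 4)) ∂μ := by
      refine integral_mono_ae (hI v) (((hinteg f).const_mul _).add ((hinteg v).const_mul _)) ?_
      filter_upwards [hρ] with x hx
      have := mul_le_mul_of_nonneg_left (young (u x) (inner ℝ (k x) v)) hx
      rw [hu4] at this
      linarith
    rw [integral_add ((hinteg f).const_mul _) ((hinteg v).const_mul _), integral_const_mul,
      integral_const_mul] at h1
    linarith [hmax v hv]
  have hbound : ∀ v, ‖Λ v‖ ≤ M * ‖v‖ := by
    intro v
    rcases eq_or_ne v 0 with rfl | hv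
    · simp
    have hv' : 0 < ‖v‖ := norm_pos_iff.2 hv
    have h1 := hball (‖v‖⁻¹ • v) (by rw [norm_smul, norm_inv, norm_norm, inv_mul_cancel₀ hv'.ne'])
    have h2 := hball (-(‖v‖⁻¹ • v)) (by
      rw [norm_neg, norm_smul, norm_inv, norm_norm, inv_mul_cancel₀ hv'.ne'])
    rw [map_neg] at h2
    rw [map_smul, smul_eq_mul, inv_mul_eq_div] at h1 h2
    rw [Real.norm_eq_abs, abs_le]
    constructor
    · have : -M ≤ Λ v / ‖v‖ := by linarith
      rw [le_div_iff₀ hv'] at this; linarith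
    · rwa [div_le_iff₀ hv'] at h1
  have hM0 : 0 ≤ M := integral_nonneg_of_ae (by
    filter_upwards [hρ] with x hx
    exact mul_nonneg hx (by positivity))
  let L : StrongDual ℝ H := Λ.mkContinuous M hbound
  refine ⟨(InnerProductSpace.toDual ℝ H).symm L, ?_, fun v => ⟨hI v, ?_⟩⟩
  · rw [LinearIsometryEquiv.norm_map]
    exact Λ.mkContinuous_norm_le hM0 hbound
  · rw [InnerProductSpace.toDual_symm_apply]; rfl

/-- If `⟪k x, k y⟫ ≥ 0`, there is an extremal `h` of `∫ ρ ⟪k, ·⟫⁴` over the unit ball with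
`⟪k y, h⟫ ≥ 0` for all `y`, satisfying the Euler–Lagrange equation. It is `M⁻¹ g`, where `g`
represents `∫ ρ |⟪k, f⟫|³ ⟪k, ·⟫`: positivity of the kernel yields `⟪k y, h⟫ ≥ |⟪k y, f⟫|`, so `h`
does at least as well as `f`. -/
theorem exists_nonneg_extremal {H X : Type*} [NormedAddCommGroup H] [InnerProductSpace ℝ H]
    [CompleteSpace H] [MeasurableSpace X] (μ : Measure X) (ρ : X → ℝ) (k : X → H)
    (hρ : ∀ᵐ x ∂μ, 0 ≤ ρ x) (hρm : AEStronglyMeasurable ρ μ)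
    (hkm : ∀ f, AEStronglyMeasurable (fun x => inner ℝ (k x) f) μ)
    (hinteg : ∀ f, Integrable (fun x => ρ x * inner ℝ (k x) f ^ 4) μ)
    (hk0 : ∀ x y, 0 ≤ inner ℝ (k x) (k y))
    (f : H) (hf : ‖f‖ ≤ 1) (hmax : ∀ v, ‖v‖ ≤ 1 →
      ∫ x, ρ x * inner ℝ (k x) v ^ 4 ∂μ ≤ ∫ x, ρ x * inner ℝ (k x) f ^ 4 ∂μ)
    (hpos : 0 < ∫ x, ρ x * inner ℝ (k x) f ^ 4 ∂μ) :
    ∃ M > 0, ∃ h : H, ‖h‖ ≤ 1 ∧ (∫ x, ρ x * inner ℝ (k x) h ^ 4 ∂μ) = M ∧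
      ∀ y, 0 ≤ inner ℝ (k y) h ∧
        Integrable (fun x => ρ x * inner ℝ (k x) h ^ 3 * inner ℝ (k x) (k y)) μ ∧
        M * inner ℝ (k y) h = ∫ x, ρ x * inner ℝ (k x) h ^ 3 * inner ℝ (k x) (k y) ∂μ := by
  -- an extremal satisfies the Euler–Lagrange equation
  have key : ∀ f : H, ‖f‖ ≤ 1 → (∀ v, ‖v‖ ≤ 1 →
      ∫ x, ρ x * inner ℝ (k x) v ^ 4 ∂μ ≤ ∫ x, ρ x * inner ℝ (k x) f ^ 4 ∂μ) →
      ∀ v, Integrable (fun x => ρ x * inner ℝ (k x) f ^ 3 * inner ℝ (k x) v) μ ∧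
        (∫ x, ρ x * inner ℝ (k x) f ^ 4 ∂μ) * inner ℝ v f =
        ∫ x, ρ x * inner ℝ (k x) f ^ 3 * inner ℝ (k x) v ∂μ := by
    intro f hf hmax
    obtain ⟨g, hg, hgv⟩ := exists_riesz_cube μ ρ k hρ hρm hkm hinteg f hmax
      (fun x => inner ℝ (k x) f) (hkm f) (fun x => rfl)
    set M := ∫ x, ρ x * inner ℝ (k x) f ^ 4 ∂μ with hM
    have h1 : inner ℝ g f = M := by
      rw [(hgv f).2, hM]
      congr 1; ext x; ring
    -- equality in Cauchy–Schwarz: `⟪g, f⟫ = M` while `‖g‖ ≤ M` and `‖f‖ ≤ 1`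
    have h2 : g = M • f := by
      rw [← sub_eq_zero, ← norm_eq_zero, ← sq_eq_zero_iff]
      refine le_antisymm ?_ (sq_nonneg _)
      rw [norm_sub_sq_real, inner_smul_right, h1, norm_smul, mul_pow, Real.norm_eq_abs, sq_abs]
      have h3 : ‖g‖ ^ 2 ≤ M ^ 2 := pow_le_pow_left₀ (norm_nonneg _) hg 2
      have h4 : ‖f‖ ^ 2 ≤ 1 := pow_le_one₀ (norm_nonneg _) hf
      nlinarith [sq_nonneg M]
    intro v
    refine ⟨(hgv v).1, ?_⟩
    rw [← (hgv v).2, h2, inner_smul_left, real_inner_comm]; rfl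
  set M := ∫ x, ρ x * inner ℝ (k x) f ^ 4 ∂μ with hM
  obtain ⟨g, hg, hgv⟩ := exists_riesz_cube μ ρ k hρ hρm hkm hinteg f hmax
    (fun x => |inner ℝ (k x) f|) (hkm f).norm (fun x => abs_abs _)
  have hh1 : ‖M⁻¹ • g‖ ≤ 1 := by
    rw [norm_smul, norm_inv, Real.norm_eq_abs, abs_of_pos hpos, inv_mul_eq_div]
    exact (div_le_one hpos).2 hg
  have hge : ∀ y, |inner ℝ (k y) f| ≤ inner ℝ (k y) (M⁻¹ • g) := by
    intro y
    have h1 := (key f hf hmax (k y)).2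
    have h2 : M * |inner ℝ (k y) f| ≤ inner ℝ g (k y) := by
      rw [(hgv (k y)).2, ← abs_of_pos hpos, ← abs_mul, h1, ← Real.norm_eq_abs]
      refine (norm_integral_le_integral_norm _).trans (le_of_eq (integral_congr_ae ?_))
      filter_upwards [hρ] with x hx
      simp only [norm_mul, norm_pow, Real.norm_eq_abs, abs_of_nonneg hx, abs_of_nonneg (hk0 x y)]
    rw [inner_smul_right, ← real_inner_comm (k y) g, inv_mul_eq_div, le_div_iff₀ hpos]
    linarith
  have hle : M ≤ ∫ x, ρ x * inner ℝ (k x) (M⁻¹ • g) ^ 4 ∂μ := by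
    refine integral_mono_ae (hinteg f) (hinteg _) ?_
    filter_upwards [hρ] with x hx
    refine mul_le_mul_of_nonneg_left ?_ hx
    rw [← Even.pow_abs (by decide)]
    exact pow_le_pow_left₀ (abs_nonneg _) (hge x) 4
  have hEq : (∫ x, ρ x * inner ℝ (k x) (M⁻¹ • g) ^ 4 ∂μ) = M := le_antisymm (hmax _ hh1) hle
  refine ⟨M, hpos, M⁻¹ • g, hh1, hEq, fun y => ⟨(abs_nonneg _).trans (hge y), ?_⟩⟩
  have := key (M⁻¹ • g) hh1 (by rw [hEq]; exact hmax) (k y)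
  rw [hEq] at this
  exact this

/-! ### The Dirichlet Green function as a Gram kernel in `L²` -/

/-- The Green function of `-d²/ds² + a²` on `(0, ∞)` with Dirichlet condition at `0`. It is the
intended one for `s, t ≥ 0`; the formula is not truncated elsewhere. -/
noncomputable def dirichletGreen (a s t : ℝ) : ℝ :=
  (Real.exp (-(a * |s - t|)) - Real.exp (-(a * (s + t)))) / (2 * a)

/-- The kernel of the causal solution operator of `w' + a w = f`, `w 0 = 0`, as a function of the
source point; it vanishes when `s ≤ 0`. -/
noncomputable def resolventKernel (a s : ℝ) : ℝ → ℝ :=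
  indicator (Ioc 0 s) fun t => Real.exp (-(a * (s - t)))

theorem resolventKernel_nonneg (a s t : ℝ) : 0 ≤ resolventKernel a s t :=
  indicator_nonneg (fun _ _ => (Real.exp_pos _).le) t

theorem resolventKernel_le_one {a : ℝ} (ha : 0 < a) (s t : ℝ) : resolventKernel a s t ≤ 1 := by
  unfold resolventKernel
  refine indicator_le' (fun x hx => ?_) (fun _ _ => zero_le_one) t
  rw [Real.exp_le_one_iff]
  have := mul_nonneg ha.le (sub_nonneg.2 hx.2)
  linarith

theorem measurable_resolventKernel (a s : ℝ) : Measurable (resolventKernel a s) :=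
  (by fun_prop : Measurable fun t => Real.exp (-(a * (s - t)))).indicator measurableSet_Ioc

theorem memLp_resolventKernel {a : ℝ} (ha : 0 < a) (s : ℝ) :
    MemLp (resolventKernel a s) 2 (volume : Measure ℝ) := by
  have h1 : MemLp (indicator (Ioc 0 s) fun _ => (1 : ℝ)) 2 (volume : Measure ℝ) :=
    memLp_indicator_const 2 measurableSet_Ioc 1 (Or.inr (by simp))
  refine h1.mono (measurable_resolventKernel a s).aestronglyMeasurable (ae_of_all _ fun t => ?_)
  rw [Real.norm_of_nonneg (resolventKernel_nonneg a s t)]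
  by_cases ht : t ∈ Ioc 0 s
  · simpa [ht] using resolventKernel_le_one ha s t
  · simp [resolventKernel, ht]

theorem integral_resolventKernel_mul {a : ℝ} (ha : 0 < a) {s t : ℝ} (hs : 0 ≤ s) (hst : s ≤ t) :
    ∫ x, resolventKernel a s x * resolventKernel a t x = dirichletGreen a s t := by
  have h1 : (fun x => resolventKernel a s x * resolventKernel a t x) =
      indicator (Ioc 0 s) fun x => Real.exp (-(a * (s + t))) * Real.exp (2 * a * x) := by
    ext x
    by_cases hx : x ∈ Ioc 0 s
    · have hx' : x ∈ Ioc 0 t := ⟨hx.1, hx.2.trans hst⟩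
      simp only [resolventKernel, hx, hx', indicator_of_mem, ← Real.exp_add]
      congr 1; ring
    · simp [resolventKernel, hx]
  rw [h1, integral_indicator measurableSet_Ioc, ← intervalIntegral.integral_of_le hs,
    intervalIntegral.integral_const_mul,
    intervalIntegral.integral_comp_mul_left (fun y => Real.exp y) (by positivity : 2 * a ≠ 0),
    integral_exp, dirichletGreen, abs_sub_comm, abs_of_nonneg (sub_nonneg.2 hst)]
  have : Real.exp (-(a * (t - s))) = Real.exp (-(a * (s + t))) * Real.exp (2 * a * s) := by
    rw [← Real.exp_add]; congr 1; ring
  rw [this, mul_zero, Real.exp_zero, smul_eq_mul]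
  field_simp

theorem dirichletGreen_comm (a s t : ℝ) : dirichletGreen a s t = dirichletGreen a t s := by
  unfold dirichletGreen; rw [abs_sub_comm, add_comm]

theorem resolventKernel_max (a s : ℝ) : resolventKernel a (max s 0) = resolventKernel a s := by
  rcases le_total s 0 with h | h
  · rw [max_eq_right h]; unfold resolventKernel
    rw [Ioc_eq_empty (by simp), Ioc_eq_empty (by simpa using h)]; simp
  · rw [max_eq_left h]

/-- One half of the Schur test: the kernel has mass at most `a⁻¹` in its first variable. -/
theorem lintegral_resolventKernel_le {a : ℝ} (ha : 0 < a) (t : ℝ) :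
    ∫⁻ s, ENNReal.ofReal (resolventKernel a s t) ≤ ENNReal.ofReal a⁻¹ := by
  have h1 : ∀ s, ENNReal.ofReal (resolventKernel a s t) ≤
      indicator (Ici t) (fun s => ENNReal.ofReal (Real.exp (-a * s) * Real.exp (a * t))) s := by
    intro s
    by_cases h : t ∈ Ioc 0 s
    · rw [indicator_of_mem (show s ∈ Ici t from h.2), resolventKernel, indicator_of_mem h,
        ← Real.exp_add]
      refine le_of_eq ?_
      congr 2; ring
    · simp [resolventKernel, h]
  refine (lintegral_mono h1).trans ?_
  have hi : IntegrableOn (fun s => Real.exp (-a * s) * Real.exp (a * t)) (Ioi t) :=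
    (integrableOn_exp_mul_Ioi (by linarith) t).mul_const _
  rw [lintegral_indicator measurableSet_Ici, ← restrict_Ioi_eq_restrict_Ici,
    ← ofReal_integral_eq_lintegral_ofReal hi (ae_of_all _ fun _ => by positivity),
    integral_mul_const, integral_exp_mul_Ioi (by linarith)]
  refine ENNReal.ofReal_le_ofReal (le_of_eq ?_)
  rw [neg_div_neg_eq, div_mul_eq_mul_div, ← Real.exp_add]
  simp

/-- The solution operator `(d/ds + a)⁻¹` is bounded on `L²` with norm at most `a⁻¹`
(Schur test). -/
theorem lintegral_sq_resolvent_le {a : ℝ} (ha : 0 < a) (f : ℝ → ℝ) (hf : Measurable f)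
    (hf2 : Integrable fun t => f t ^ 2) :
    ∫⁻ s, ENNReal.ofReal ((∫ t, resolventKernel a s t * f t) ^ 2) ≤
      ENNReal.ofReal (a⁻¹ ^ 2 * ∫ t, f t ^ 2) := by
  have hmeas : Measurable (Function.uncurry fun s t : ℝ => resolventKernel a s t) := by
    have : (Function.uncurry fun s t : ℝ => resolventKernel a s t) =
        indicator {p : ℝ × ℝ | 0 < p.2 ∧ p.2 ≤ p.1}
          (fun p => Real.exp (-(a * (p.1 - p.2)))) := by
      ext ⟨s, t⟩
      simp [Function.uncurry, resolventKernel, indicator]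
    rw [this]
    refine (by fun_prop : Measurable fun p : ℝ × ℝ => Real.exp (-(a * (p.1 - p.2)))).indicator ?_
    exact (measurableSet_lt measurable_const measurable_snd).inter
      (measurableSet_le measurable_snd measurable_fst)
  have hk1 : ∀ s, Integrable (resolventKernel a s) := by
    intro s
    have : Integrable (indicator (Ioc 0 s) fun _ => (1 : ℝ)) :=
      (integrable_indicator_iff measurableSet_Ioc).2 (integrableOn_const (by simp))
    refine this.mono' (measurable_resolventKernel a s).aestronglyMeasurable
      (ae_of_all _ fun t => ?_)
    rw [Real.norm_of_nonneg (resolventKernel_nonneg a s t)]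
    by_cases ht : t ∈ Ioc 0 s
    · simpa [ht] using resolventKernel_le_one ha s t
    · simp [resolventKernel, ht]
  have hk1i : ∀ s, ∫ t, resolventKernel a s t ≤ a⁻¹ := by
    intro s
    rcases le_total s 0 with h | h
    · rw [← resolventKernel_max, max_eq_right h]
      simp [resolventKernel, ha.le]
    · have h2 : ∀ t, Real.exp (-(a * (s - t))) = Real.exp (-(a * s)) * Real.exp (a * t) :=
        fun t => by rw [← Real.exp_add]; congr 1; ring
      unfold resolventKernel
      rw [integral_indicator measurableSet_Ioc, ← intervalIntegral.integral_of_le h]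
      simp only [h2]
      rw [intervalIntegral.integral_const_mul,
        intervalIntegral.integral_comp_mul_left (fun y => Real.exp y) ha.ne', integral_exp,
        smul_eq_mul, mul_left_comm, mul_sub, ← Real.exp_add]
      have := Real.exp_pos (-(a * s) + a * 0)
      have h3 : Real.exp (-(a * s) + a * s) = 1 := by simp
      rw [← Real.exp_add, h3]
      have : 0 < a⁻¹ := inv_pos.2 ha
      nlinarith
  have hk2 : ∀ s, Integrable fun t => resolventKernel a s t * f t ^ 2 := fun s =>
    hf2.bdd_mul (c := 1) (measurable_resolventKernel a s).aestronglyMeasurable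
      (ae_of_all _ fun t => by
        rw [Real.norm_of_nonneg (resolventKernel_nonneg a s t)]
        exact resolventKernel_le_one ha s t)
  have hkf : ∀ s, Integrable fun t => resolventKernel a s t * f t := fun s =>
    ((hk1 s).add (hk2 s)).mono' ((measurable_resolventKernel a s).mul hf).aestronglyMeasurable
      (ae_of_all _ fun t => by
        rw [Real.norm_eq_abs, abs_mul, abs_of_nonneg (resolventKernel_nonneg a s t)]
        have : |f t| ≤ 1 + f t ^ 2 := by
          rw [abs_le]; constructor <;> nlinarith [sq_nonneg (f t - 1), sq_nonneg (f t + 1)]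
        have := mul_le_mul_of_nonneg_left this (resolventKernel_nonneg a s t)
        simp only [Pi.add_apply]
        linarith)
  -- Cauchy–Schwarz, through `2 c f ≤ c ^ 2 + f ^ 2` with the optimal constant `c = a * w`
  have hcs : ∀ s, (∫ t, resolventKernel a s t * f t) ^ 2 ≤
      a⁻¹ * ∫ t, resolventKernel a s t * f t ^ 2 := by
    intro s
    set w := ∫ t, resolventKernel a s t * f t with hw
    have h1 : ∫ t, 2 * (a * w) * (resolventKernel a s t * f t) ≤
        ∫ t, ((a * w) ^ 2 * resolventKernel a s t + resolventKernel a s t * f t ^ 2) := by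
      refine integral_mono ((hkf s).const_mul _) (((hk1 s).const_mul _).add (hk2 s)) fun t => ?_
      have := mul_nonneg (resolventKernel_nonneg a s t) (sq_nonneg (a * w - f t))
      simp only
      nlinarith
    rw [integral_const_mul, integral_add ((hk1 s).const_mul _) (hk2 s), integral_const_mul,
      ← hw] at h1
    have h2 : (a * w) ^ 2 * ∫ t, resolventKernel a s t ≤ (a * w) ^ 2 * a⁻¹ :=
      mul_le_mul_of_nonneg_left (hk1i s) (sq_nonneg _)
    have h3 : (a * w) ^ 2 * a⁻¹ = a * w ^ 2 := by field_simp
    rw [inv_mul_eq_div, le_div_iff₀ ha]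
    linarith
  calc ∫⁻ s, ENNReal.ofReal ((∫ t, resolventKernel a s t * f t) ^ 2)
      ≤ ∫⁻ s, ∫⁻ t, ENNReal.ofReal a⁻¹ *
          (ENNReal.ofReal (resolventKernel a s t) * ENNReal.ofReal (f t ^ 2)) := by
        refine lintegral_mono fun s => ?_
        simp only
        refine (ENNReal.ofReal_le_ofReal (hcs s)).trans (le_of_eq ?_)
        rw [lintegral_const_mul' _ _ ENNReal.ofReal_ne_top, ENNReal.ofReal_mul (by positivity),
          ofReal_integral_eq_lintegral_ofReal (hk2 s) (ae_of_all _ fun t =>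
            mul_nonneg (resolventKernel_nonneg a s t) (sq_nonneg _))]
        congr 2; ext t
        rw [ENNReal.ofReal_mul (resolventKernel_nonneg a s t)]
    _ = ∫⁻ t, ∫⁻ s, ENNReal.ofReal a⁻¹ *
          (ENNReal.ofReal (resolventKernel a s t) * ENNReal.ofReal (f t ^ 2)) := by
        rw [lintegral_lintegral_swap]
        refine Measurable.aemeasurable ?_
        exact (measurable_const.mul ((hmeas.ennreal_ofReal).mul
          ((hf.comp measurable_snd).pow_const 2).ennreal_ofReal))
    _ ≤ ∫⁻ t, ENNReal.ofReal (a⁻¹ ^ 2) * ENNReal.ofReal (f t ^ 2) := by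
        refine lintegral_mono fun t => ?_
        simp only
        rw [lintegral_const_mul' _ _ ENNReal.ofReal_ne_top,
          lintegral_mul_const' _ _ ENNReal.ofReal_ne_top, sq a⁻¹,
          ENNReal.ofReal_mul (by positivity), mul_assoc]
        gcongr
        exact lintegral_resolventKernel_le ha t
    _ = _ := by
        rw [lintegral_const_mul' _ _ ENNReal.ofReal_ne_top, ENNReal.ofReal_mul (by positivity),
          ofReal_integral_eq_lintegral_ofReal hf2 (ae_of_all _ fun t => sq_nonneg _)]

/-- The kernels `k_s`, as elements of `L²(ℝ)`, form a continuous curve whose Gram matrix is the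
Green function, and `f ↦ ⟪k_·, f⟫` is bounded on `L²`. The curve is extended to negative
parameters by `k_s = 0`. -/
theorem exists_greenSection {a : ℝ} (ha : 0 < a) :
    ∃ k : ℝ → Lp ℝ 2 (volume : Measure ℝ),
      (∀ s t, inner ℝ (k s) (k t) = dirichletGreen a (max s 0) (max t 0)) ∧
      Continuous k ∧
      ∀ f, Integrable (fun s => inner ℝ (k s) f ^ 2) ∧
        ∫ s, inner ℝ (k s) f ^ 2 ≤ a⁻¹ ^ 2 * ‖f‖ ^ 2 := by
  set k : ℝ → Lp ℝ 2 (volume : Measure ℝ) := fun s => (memLp_resolventKernel ha s).toLp _ with hk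
  have hin : ∀ s f, inner ℝ (k s) f = ∫ t, resolventKernel a s t * f t := by
    intro s f
    rw [L2.inner_def]
    refine integral_congr_ae ?_
    filter_upwards [(memLp_resolventKernel ha s).coeFn_toLp] with t ht
    simp only [hk, ht, RCLike.inner_apply, conj_trivial]
    ring
  have hG : ∀ s t, inner ℝ (k s) (k t) = dirichletGreen a (max s 0) (max t 0) := by
    intro s t
    rw [hin]
    have h1 : ∫ x, resolventKernel a s x * k t x =
        ∫ x, resolventKernel a (max s 0) x * resolventKernel a (max t 0) x := by
      simp only [resolventKernel_max]
      refine integral_congr_ae ?_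
      filter_upwards [(memLp_resolventKernel ha t).coeFn_toLp] with x hx
      rw [hk]; simp only [hx]
    rw [h1]
    rcases le_total (max s 0) (max t 0) with h | h
    · exact integral_resolventKernel_mul ha (le_max_right _ _) h
    · rw [dirichletGreen_comm, ← integral_resolventKernel_mul ha (le_max_right _ _) h]
      simp only [mul_comm]
  have hcont : Continuous k := by
    rw [continuous_iff_continuousAt]
    intro s
    rw [ContinuousAt, tendsto_iff_norm_sub_tendsto_zero]
    have h1 : ∀ t, ‖k t - k s‖ = Real.sqrt (dirichletGreen a (max t 0) (max t 0)
        - 2 * dirichletGreen a (max t 0) (max s 0) + dirichletGreen a (max s 0) (max s 0)) := by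
      intro t
      rw [← hG, ← hG, ← hG, real_inner_self_eq_norm_sq, real_inner_self_eq_norm_sq,
        ← norm_sub_sq_real, Real.sqrt_sq (norm_nonneg _)]
    have h2 : Continuous fun t => Real.sqrt (dirichletGreen a (max t 0) (max t 0)
        - 2 * dirichletGreen a (max t 0) (max s 0) + dirichletGreen a (max s 0) (max s 0)) := by
      unfold dirichletGreen
      fun_prop
    have h3 := h2.tendsto s
    simp only [h1]
    convert h3 using 2
    rw [eq_comm, Real.sqrt_eq_zero']
    linarith
  refine ⟨k, hG, hcont, fun f => ?_⟩
  have hfm : Measurable (f : ℝ → ℝ) := (Lp.stronglyMeasurable f).measurable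
  have hf2 : Integrable fun t => (f : ℝ → ℝ) t ^ 2 := (Lp.memLp f).integrable_sq
  have hnorm : ∫ t, (f : ℝ → ℝ) t ^ 2 = ‖f‖ ^ 2 := by
    rw [← real_inner_self_eq_norm_sq, L2.inner_def]
    congr 1; ext t; simp [sq]
  have hle := lintegral_sq_resolvent_le ha f hfm hf2
  rw [hnorm] at hle
  simp only [← hin] at hle
  have hmeas : AEStronglyMeasurable (fun s => inner ℝ (k s) f ^ 2) (volume : Measure ℝ) :=
    ((hcont.inner continuous_const).pow 2).aestronglyMeasurable
  constructor
  · refine ⟨hmeas, ?_⟩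
    rw [hasFiniteIntegral_iff_ofReal (ae_of_all _ fun s => sq_nonneg _)]
    exact hle.trans_lt ENNReal.ofReal_lt_top
  · rw [integral_eq_lintegral_of_nonneg_ae (ae_of_all _ fun s => sq_nonneg _) hmeas]
    exact ENNReal.toReal_le_of_le_ofReal (by positivity) hle

/-! ### A positive solution of the integral equation -/

theorem dirichletGreen_nonneg {a s t : ℝ} (ha : 0 < a) (hs : 0 ≤ s) (ht : 0 ≤ t) :
    0 ≤ dirichletGreen a s t := by
  refine div_nonneg (sub_nonneg.2 (Real.exp_le_exp.2 (neg_le_neg ?_))) (by positivity)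
  refine mul_le_mul_of_nonneg_left ?_ ha.le
  rw [abs_le]; constructor <;> linarith

theorem dirichletGreen_pos {a s t : ℝ} (ha : 0 < a) (hs : 0 < s) (ht : 0 < t) :
    0 < dirichletGreen a s t := by
  refine div_pos (sub_pos.2 (Real.exp_lt_exp.2 (neg_lt_neg ?_))) (by positivity)
  refine mul_lt_mul_of_pos_left ?_ ha
  rw [abs_lt]; constructor <;> linarith

theorem dirichletGreen_self_le {a s : ℝ} (ha : 0 < a) :
    dirichletGreen a s s ≤ s ∧ dirichletGreen a s s ≤ (2 * a)⁻¹ := by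
  unfold dirichletGreen
  rw [sub_self, abs_zero, mul_zero, neg_zero, Real.exp_zero]
  constructor
  · rw [div_le_iff₀ (by positivity)]
    have := Real.add_one_le_exp (-(a * (s + s)))
    linarith
  · rw [div_le_iff₀ (by positivity), inv_mul_cancel₀ (by positivity)]
    linarith [Real.exp_pos (-(a * (s + s)))]

/-- Existence of a positive solution of the integral equation, together with the a priori bounds
coming from `‖k_s‖² = G(s, s) ≤ min s (2 a)⁻¹`. -/
theorem exists_integral_solution {n a β : ℝ} (hn0 : 0 < n) (hn3 : n < 3) (ha : 0 < a)
    (hβ : 0 < β) :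
    ∃ w : ℝ → ℝ, Continuous w ∧ (∀ s > 0, 0 < w s) ∧
      (∃ K > 0, ∀ s > 0, w s ^ 2 ≤ K * s ∧ w s ^ 2 ≤ K) ∧
      ∀ s > 0,
        IntegrableOn (fun t => dirichletGreen a s t * (β * t ^ (-n) * w t ^ 3)) (Ioi 0) ∧
        w s = ∫ t in Ioi 0, dirichletGreen a s t * (β * t ^ (-n) * w t ^ 3) := by
  obtain ⟨k, hG, hkc, hk2⟩ := exists_greenSection ha
  set b : ℝ := (2 * a)⁻¹ with hb
  have hb0 : 0 < b := by positivity
  have hwc : ∀ f, Continuous fun s => inner ℝ (k s) f := fun f => hkc.inner continuous_const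
  have hkn : ∀ s > 0, ‖k s‖ ^ 2 ≤ s ∧ ‖k s‖ ^ 2 ≤ b := by
    intro s hs
    rw [← real_inner_self_eq_norm_sq, hG, max_eq_left hs.le]
    exact dirichletGreen_self_le ha
  have hwn : ∀ f, ∀ s > 0, inner ℝ (k s) f ^ 2 ≤ s * ‖f‖ ^ 2 ∧
      inner ℝ (k s) f ^ 2 ≤ b * ‖f‖ ^ 2 := by
    intro f s hs
    have h1 : inner ℝ (k s) f ^ 2 ≤ ‖k s‖ ^ 2 * ‖f‖ ^ 2 := by
      rw [← mul_pow, ← sq_abs]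
      exact pow_le_pow_left₀ (abs_nonneg _) (abs_real_inner_le_norm _ _) 2
    exact ⟨h1.trans (mul_le_mul_of_nonneg_right (hkn s hs).1 (sq_nonneg _)),
      h1.trans (mul_le_mul_of_nonneg_right (hkn s hs).2 (sq_nonneg _))⟩
  have hρm : Measurable fun t : ℝ => t ^ (-n) := by fun_prop
  have hJm : ∀ f, Measurable fun t : ℝ => t ^ (-n) * inner ℝ (k t) f ^ 4 := fun f =>
    hρm.mul ((hwc f).measurable.pow_const 4)
  have hdom : ∀ R : ℝ, IntegrableOn (fun t : ℝ => t ^ (2 - n)) (Ioc 0 R) := by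
    intro R
    rcases le_total R 0 with h | h
    · rw [Ioc_eq_empty (by simpa using h)]; exact integrableOn_empty
    · rw [← intervalIntegrable_iff_integrableOn_Ioc_of_le h]
      exact intervalIntegral.intervalIntegrable_rpow' (by linarith)
  -- near the origin the factor `t ^ (-n)` is absorbed by the boundary behaviour `w ^ 4 ≤ C * t ^ 2`
  have hhead : ∀ f, ∀ t > 0, ‖t ^ (-n) * inner ℝ (k t) f ^ 4‖ ≤ ‖f‖ ^ 4 * t ^ (2 - n) := by
    intro f t ht
    have h1 : inner ℝ (k t) f ^ 4 ≤ t ^ 2 * ‖f‖ ^ 4 := by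
      have := pow_le_pow_left₀ (sq_nonneg _) (hwn f t ht).1 2
      calc inner ℝ (k t) f ^ 4 = (inner ℝ (k t) f ^ 2) ^ 2 := by ring
        _ ≤ _ := this
        _ = _ := by ring
    have h2 : t ^ (2 - n) = t ^ (-n) * t ^ 2 := by
      rw [← Real.rpow_natCast t 2, ← Real.rpow_add ht]; congr 1; push_cast; ring
    have h3 : 0 < t ^ (-n) := Real.rpow_pos_of_pos ht _
    rw [Real.norm_of_nonneg (by positivity), h2]
    calc t ^ (-n) * inner ℝ (k t) f ^ 4 ≤ t ^ (-n) * (t ^ 2 * ‖f‖ ^ 4) :=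
          mul_le_mul_of_nonneg_left h1 h3.le
      _ = _ := by ring
  -- far out, one factor `w ^ 2` is bounded, the other is integrable and `t ^ (-n)` is small
  have htail : ∀ f, ∀ R ≥ 1, ∀ t > R, ‖t ^ (-n) * inner ℝ (k t) f ^ 4‖ ≤
      R ^ (-n) * (b * ‖f‖ ^ 2) * inner ℝ (k t) f ^ 2 := by
    intro f R hR t ht
    have ht0 : 0 < t := by linarith
    have h1 : inner ℝ (k t) f ^ 4 ≤ (b * ‖f‖ ^ 2) * inner ℝ (k t) f ^ 2 := by
      have := mul_le_mul_of_nonneg_right (hwn f t ht0).2 (sq_nonneg (inner ℝ (k t) f))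
      calc inner ℝ (k t) f ^ 4 = inner ℝ (k t) f ^ 2 * inner ℝ (k t) f ^ 2 := by ring
        _ ≤ _ := this
    have h3 : 0 < t ^ (-n) := Real.rpow_pos_of_pos ht0 _
    have h4 : t ^ (-n) ≤ R ^ (-n) :=
      Real.rpow_le_rpow_of_nonpos (by linarith) ht.le (by linarith)
    rw [Real.norm_of_nonneg (by positivity), mul_assoc]
    exact mul_le_mul h4 h1 (by positivity) (h3.le.trans h4)
  have hIhead : ∀ f R, IntegrableOn (fun t : ℝ => t ^ (-n) * inner ℝ (k t) f ^ 4) (Ioc 0 R) := by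
    intro f R
    refine ((hdom R).const_mul (‖f‖ ^ 4)).mono' (hJm f).aestronglyMeasurable ?_
    filter_upwards [ae_restrict_mem measurableSet_Ioc] with t ht
    exact hhead f t ht.1
  have hItail : ∀ f, ∀ R ≥ 1,
      IntegrableOn (fun t : ℝ => t ^ (-n) * inner ℝ (k t) f ^ 4) (Ioi R) := by
    intro f R hR
    refine ((hk2 f).1.integrableOn.const_mul (R ^ (-n) * (b * ‖f‖ ^ 2))).mono'
      (hJm f).aestronglyMeasurable ?_
    filter_upwards [ae_restrict_mem measurableSet_Ioi] with t ht
    exact htail f R hR t ht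
  have hI : ∀ f, IntegrableOn (fun t : ℝ => t ^ (-n) * inner ℝ (k t) f ^ 4) (Ioi 0) := by
    intro f
    rw [← Ioc_union_Ioi_eq_Ioi (zero_le_one : (0 : ℝ) ≤ 1)]
    exact (hIhead f 1).union (hItail f 1 le_rfl)
  set J : Lp ℝ 2 (volume : Measure ℝ) → ℝ :=
    fun f => ∫ t in Ioi 0, t ^ (-n) * inner ℝ (k t) f ^ 4 with hJ
  have hsplit : ∀ f, ∀ R ≥ 1, J f = (∫ t in Ioc 0 R, t ^ (-n) * inner ℝ (k t) f ^ 4) +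
      ∫ t in Ioi R, t ^ (-n) * inner ℝ (k t) f ^ 4 := by
    intro f R hR
    rw [hJ]
    simp only
    rw [← Ioc_union_Ioi_eq_Ioi (by linarith : (0 : ℝ) ≤ R)]
    exact setIntegral_union (Ioc_disjoint_Ioi le_rfl) measurableSet_Ioi (hIhead f R) (hItail f R hR)
  set D : ℝ := b * a⁻¹ ^ 2 with hD
  have hD0 : 0 < D := by positivity
  have htailI : ∀ f, ‖f‖ ≤ 1 → ∀ R ≥ 1,
      |∫ t in Ioi R, t ^ (-n) * inner ℝ (k t) f ^ 4| ≤ R ^ (-n) * D := by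
    intro f hf R hR
    have hR0 : 0 < R ^ (-n) := Real.rpow_pos_of_pos (by linarith) _
    have hf2 : ‖f‖ ^ 2 ≤ 1 := pow_le_one₀ (norm_nonneg _) hf
    have h1 : |∫ t in Ioi R, t ^ (-n) * inner ℝ (k t) f ^ 4| ≤
        ∫ t in Ioi R, R ^ (-n) * (b * ‖f‖ ^ 2) * inner ℝ (k t) f ^ 2 := by
      rw [← Real.norm_eq_abs]
      refine norm_integral_le_of_norm_le ((hk2 f).1.integrableOn.const_mul _) ?_
      filter_upwards [ae_restrict_mem measurableSet_Ioi] with t ht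
      exact htail f R hR t ht
    rw [integral_const_mul] at h1
    have h2 : ∫ t in Ioi R, inner ℝ (k t) f ^ 2 ≤ a⁻¹ ^ 2 * ‖f‖ ^ 2 :=
      (setIntegral_le_integral (hk2 f).1 (ae_of_all _ fun t => sq_nonneg _)).trans (hk2 f).2
    calc _ ≤ _ := h1
      _ ≤ R ^ (-n) * (b * 1) * (a⁻¹ ^ 2 * 1) := by
        refine mul_le_mul (by gcongr) (h2.trans (by gcongr))
          (integral_nonneg fun t => sq_nonneg _) (by positivity)
      _ = _ := by rw [hD]; ring
  have hheadb : ∀ f, ‖f‖ ≤ 1 → ∀ t > 0, ‖t ^ (-n) * inner ℝ (k t) f ^ 4‖ ≤ t ^ (2 - n) := by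
    intro f hf t ht
    refine (hhead f t ht).trans ?_
    have h1 : ‖f‖ ^ 4 ≤ 1 := pow_le_one₀ (norm_nonneg _) hf
    have h2 : 0 < t ^ (2 - n) := Real.rpow_pos_of_pos ht _
    nlinarith
  have hJC : ∀ f, ‖f‖ ≤ 1 → J f ≤ (∫ t in Ioc (0 : ℝ) 1, t ^ (2 - n)) + D := by
    intro f hf
    rw [hsplit f 1 le_rfl]
    refine add_le_add ?_ ?_
    · refine (le_abs_self _).trans ?_
      rw [← Real.norm_eq_abs]
      refine norm_integral_le_of_norm_le (hdom 1) ?_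
      filter_upwards [ae_restrict_mem measurableSet_Ioc] with t ht
      exact hheadb f hf t ht.1
    · simpa using (le_abs_self _).trans (htailI f hf 1 le_rfl)
  have hJcont : ∀ (F : ℕ → Lp ℝ 2 (volume : Measure ℝ)) (f : Lp ℝ 2 (volume : Measure ℝ)),
      (∀ j, ‖F j‖ ≤ 1) → ‖f‖ ≤ 1 →
      (∀ v, Tendsto (fun j => inner ℝ v (F j)) atTop (𝓝 (inner ℝ v f))) →
      Tendsto (fun j => J (F j)) atTop (𝓝 (J f)) := by
    intro F f hF hf hlim
    rw [Metric.tendsto_atTop]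
    intro ε hε
    obtain ⟨R, hRε, hR1⟩ : ∃ R : ℝ, R ^ (-n) * D < ε / 3 ∧ 1 ≤ R := by
      have h1 : Tendsto (fun R : ℝ => R ^ (-n) * D) atTop (𝓝 (0 * D)) :=
        (tendsto_rpow_neg_atTop hn0).mul_const D
      rw [zero_mul] at h1
      exact ((h1.eventually (gt_mem_nhds (by positivity : 0 < ε / 3))).and
        (eventually_ge_atTop 1)).exists
    have hhl : Tendsto (fun j => ∫ t in Ioc 0 R, t ^ (-n) * inner ℝ (k t) (F j) ^ 4) atTop
        (𝓝 (∫ t in Ioc 0 R, t ^ (-n) * inner ℝ (k t) f ^ 4)) := by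
      refine tendsto_integral_of_dominated_convergence (fun t => t ^ (2 - n))
        (fun j => (hJm (F j)).aestronglyMeasurable) (hdom R) (fun j => ?_) ?_
      · filter_upwards [ae_restrict_mem measurableSet_Ioc] with t ht
        exact hheadb (F j) (hF j) t ht.1
      · exact ae_of_all _ fun t => ((hlim (k t)).pow 4).const_mul _
    obtain ⟨N, hN⟩ := Metric.tendsto_atTop.1 hhl (ε / 3) (by positivity)
    refine ⟨N, fun j hj => ?_⟩
    have h1 := hN j hj
    have h2 := htailI (F j) (hF j) R hR1
    have h3 := htailI f hf R hR1
    rw [Real.dist_eq, hsplit (F j) R hR1, hsplit f R hR1]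
    rw [Real.dist_eq] at h1
    rw [abs_lt] at h1 ⊢
    rw [abs_le] at h2 h3
    constructor <;> linarith
  have : Fact ((2 : ENNReal) ≠ ⊤) := ⟨by simp⟩
  obtain ⟨f, hf, hmax⟩ := exists_maximiser_unitBall J _ hJC hJcont
  have hρ : ∀ᵐ t ∂(volume.restrict (Ioi (0 : ℝ))), 0 ≤ t ^ (-n) := by
    filter_upwards [ae_restrict_mem measurableSet_Ioi] with t ht
    exact Real.rpow_nonneg (le_of_lt ht) _
  have hJnn : ∀ f, 0 ≤ J f := fun f => integral_nonneg_of_ae (by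
    filter_upwards [hρ] with t ht
    exact mul_nonneg ht (by positivity))
  -- if `J` vanishes then so does the continuous function `w` on the half-line
  have hJzero : ∀ f, J f = 0 → ∀ s > 0, inner ℝ (k s) f = 0 := by
    intro f hf0 s hs
    have h1 := (integral_eq_zero_iff_of_nonneg_ae (by
      filter_upwards [hρ] with t ht
      exact mul_nonneg ht (by positivity)) (hI f)).1 hf0
    have h2 : (fun t => inner ℝ (k t) f) =ᵐ[volume.restrict (Ioi 0)] fun _ => (0 : ℝ) := by
      filter_upwards [h1, ae_restrict_mem measurableSet_Ioi] with t ht ht0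
      have : t ^ (-n) ≠ 0 := (Real.rpow_pos_of_pos ht0 _).ne'
      simpa [this] using ht
    exact Measure.eqOn_open_of_ae_eq h2 isOpen_Ioi (hwc f).continuousOn continuousOn_const hs
  have hpos : 0 < J f := by
    rcases (hJnn f).lt_or_eq with h | h
    · exact h
    exfalso
    have h1 : ‖k 1‖ ≠ 0 := by
      have : 0 < ‖k 1‖ ^ 2 := by
        rw [← real_inner_self_eq_norm_sq, hG]
        simpa using dirichletGreen_pos ha one_pos one_pos
      intro h0; rw [h0] at this; simp at this
    set v := ‖k 1‖⁻¹ • k 1 with hv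
    have hv1 : ‖v‖ = 1 := by rw [hv, norm_smul, norm_inv, norm_norm, inv_mul_cancel₀ h1]
    have h2 := hJzero v (le_antisymm (h ▸ hmax v hv1.le) (hJnn v)) 1 one_pos
    rw [hv, inner_smul_right, real_inner_self_eq_norm_sq] at h2
    simp [h1] at h2
  obtain ⟨M, hM, h, hh1, hhM, hEL⟩ := exists_nonneg_extremal (volume.restrict (Ioi (0 : ℝ)))
    (fun t => t ^ (-n)) k hρ hρm.aestronglyMeasurable
    (fun f => (hwc f).measurable.aestronglyMeasurable) hI
    (fun x y => by
      rw [hG]; exact dirichletGreen_nonneg ha (le_max_right _ _) (le_max_right _ _)) f hf hmax hpos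
  -- scaling `w = κ ⟪k, h⟫` with `κ² M β = 1` normalises the Lagrange multiplier
  set κ : ℝ := Real.sqrt (1 / (M * β)) with hκ
  have hκ0 : 0 < κ := Real.sqrt_pos.2 (by positivity)
  have hκ2 : κ ^ 2 * (M * β) = 1 := by
    rw [hκ, Real.sq_sqrt (by positivity)]
    field_simp
  have hcongr : ∀ s > 0, ∀ t ∈ Ioi (0 : ℝ), dirichletGreen a s t *
      (β * t ^ (-n) * (κ * inner ℝ (k t) h) ^ 3) =
      (β * κ ^ 3) * (t ^ (-n) * inner ℝ (k t) h ^ 3 * inner ℝ (k t) (k s)) := by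
    intro s hs t ht
    rw [hG t s, max_eq_left hs.le, max_eq_left (le_of_lt ht), dirichletGreen_comm]
    ring
  have hinteg : ∀ s > 0, IntegrableOn (fun t => dirichletGreen a s t *
      (β * t ^ (-n) * (κ * inner ℝ (k t) h) ^ 3)) (Ioi 0) := fun s hs =>
    (integrableOn_congr_fun (hcongr s hs) measurableSet_Ioi).2 ((hEL s).2.1.const_mul _)
  have heq : ∀ s > 0, κ * inner ℝ (k s) h = ∫ t in Ioi 0, dirichletGreen a s t *
      (β * t ^ (-n) * (κ * inner ℝ (k t) h) ^ 3) := by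
    intro s hs
    rw [setIntegral_congr_fun measurableSet_Ioi (hcongr s hs), integral_const_mul, ← (hEL s).2.2]
    linear_combination (-(κ * inner ℝ (k s) h)) * hκ2
  have hnn : ∀ s, 0 ≤ κ * inner ℝ (k s) h := fun s => mul_nonneg hκ0.le (hEL s).1
  refine ⟨fun s => κ * inner ℝ (k s) h, continuous_const.mul (hwc h), fun s hs => ?_,
    ⟨κ ^ 2 * (1 + b), by positivity, fun s hs => ?_⟩, fun s hs => ⟨hinteg s hs, heq s hs⟩⟩
  · -- positivity of the Green function: a zero would force `w = 0` everywhere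
    refine (hnn s).lt_of_ne fun h0 => ?_
    have h1 := (integral_eq_zero_iff_of_nonneg_ae (by
      filter_upwards [ae_restrict_mem measurableSet_Ioi] with t ht
      have := Real.rpow_nonneg (le_of_lt ht) (-n)
      have := dirichletGreen_nonneg ha hs.le (le_of_lt ht)
      have := hnn t
      simp only [Pi.zero_apply]
      positivity) (hinteg s hs)).1 ((heq s hs).symm.trans h0.symm)
    have h2 : J h = 0 := by
      refine integral_eq_zero_of_ae ?_
      filter_upwards [h1, ae_restrict_mem measurableSet_Ioi] with t ht ht0
      have h3 := (dirichletGreen_pos ha hs ht0).ne'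
      have h4 : t ^ (-n) ≠ 0 := (Real.rpow_pos_of_pos ht0 _).ne'
      have h5 : inner ℝ (k t) h = 0 := by simpa [h3, h4, hβ.ne', hκ0.ne'] using ht
      simp [h5]
    exact hM.ne' (hhM.symm.trans h2)
  · have h1 := hwn h s hs
    have h2 : ‖h‖ ^ 2 ≤ 1 := pow_le_one₀ (norm_nonneg _) hh1
    have h3 : inner ℝ (k s) h ^ 2 ≤ s := h1.1.trans (by nlinarith)
    have h4 : inner ℝ (k s) h ^ 2 ≤ b := h1.2.trans (by nlinarith)
    have h5 : 0 < κ ^ 2 := by positivity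
    rw [mul_pow, mul_assoc]
    exact ⟨mul_le_mul_of_nonneg_left (by nlinarith) h5.le,
      mul_le_mul_of_nonneg_left (by linarith) h5.le⟩

/-! ### From the integral equation to the differential equation -/

theorem monotoneOn_of_hasDerivAt {D : Set ℝ} (hD : Convex ℝ D) {f f' : ℝ → ℝ}
    (hf : ∀ x ∈ D, HasDerivAt f (f' x) x) (hf' : ∀ x ∈ D, 0 ≤ f' x) : MonotoneOn f D :=
  monotoneOn_of_hasDerivWithinAt_nonneg hD
    (fun x hx => (hf x hx).continuousAt.continuousWithinAt)
    (fun x hx => (hf x (interior_subset hx)).hasDerivWithinAt)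
    (fun x hx => hf' x (interior_subset hx))

theorem antitoneOn_of_hasDerivAt {D : Set ℝ} (hD : Convex ℝ D) {f f' : ℝ → ℝ}
    (hf : ∀ x ∈ D, HasDerivAt f (f' x) x) (hf' : ∀ x ∈ D, f' x ≤ 0) : AntitoneOn f D :=
  antitoneOn_of_hasDerivWithinAt_nonpos hD
    (fun x hx => (hf x hx).continuousAt.continuousWithinAt)
    (fun x hx => (hf x (interior_subset hx)).hasDerivWithinAt)
    (fun x hx => hf' x (interior_subset hx))

/-- For `t ≤ s` one has `G(s, t) = a⁻¹ exp (-a s) sinh (a t)`, and symmetrically for `t ≥ s`. Hence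
a Green potential is a combination of the two one-sided integrals `P` and `Q`. -/
theorem greenPotential_split {a : ℝ} (ha : 0 < a) {g w : ℝ → ℝ} (hg : ContinuousOn g (Ioi 0))
    (hinteg : ∀ s > 0, IntegrableOn (fun t => dirichletGreen a s t * g t) (Ioi 0))
    (hw : ∀ s > 0, w s = ∫ t in Ioi 0, dirichletGreen a s t * g t) :
    ∃ P Q : ℝ → ℝ,
      (∀ s > 0, IntegrableOn (fun t => Real.sinh (a * t) * g t) (Ioc 0 s) ∧
        P s = ∫ t in Ioc 0 s, Real.sinh (a * t) * g t) ∧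
      (∀ s > 0, IntegrableOn (fun t => Real.exp (-(a * t)) * g t) (Ioi s) ∧
        Q s = ∫ t in Ioi s, Real.exp (-(a * t)) * g t) ∧
      (∀ s > 0, HasDerivAt P (Real.sinh (a * s) * g s) s) ∧
      (∀ s > 0, HasDerivAt Q (-(Real.exp (-(a * s)) * g s)) s) ∧
      (∀ s > 0, a * w s = Real.exp (-(a * s)) * P s + Real.sinh (a * s) * Q s) := by
  have hlow : ∀ s t, t ≤ s →
      dirichletGreen a s t = a⁻¹ * Real.exp (-(a * s)) * Real.sinh (a * t) := by
    intro s t hst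
    rw [dirichletGreen, abs_of_nonneg (sub_nonneg.2 hst), Real.sinh_eq]
    have h1 : Real.exp (-(a * (s - t))) = Real.exp (-(a * s)) * Real.exp (a * t) := by
      rw [← Real.exp_add]; congr 1; ring
    have h2 : Real.exp (-(a * (s + t))) = Real.exp (-(a * s)) * Real.exp (-(a * t)) := by
      rw [← Real.exp_add]; congr 1; ring
    rw [h1, h2]; field_simp
  have hupp : ∀ s t, s ≤ t →
      dirichletGreen a s t = a⁻¹ * Real.sinh (a * s) * Real.exp (-(a * t)) := by
    intro s t hst
    rw [dirichletGreen_comm, hlow t s hst]; ring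
  have hP1 : ∀ s > 0, IntegrableOn (fun t => Real.sinh (a * t) * g t) (Ioc 0 s) := by
    intro s hs
    have h1 := ((hinteg s hs).mono_set (Ioc_subset_Ioi_self : Ioc 0 s ⊆ Ioi 0)).const_mul
      (a * Real.exp (a * s))
    refine (integrableOn_congr_fun (fun t ht => ?_) measurableSet_Ioc).1 h1
    rw [hlow s t ht.2]
    have h2 : Real.exp (a * s) * Real.exp (-(a * s)) = 1 := by rw [← Real.exp_add]; simp
    have h3 : a * a⁻¹ = 1 := mul_inv_cancel₀ ha.ne'
    linear_combination (Real.sinh (a * t) * g t) * (h2 * a * a⁻¹ + h3)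
  have hQ1 : ∀ s > 0, IntegrableOn (fun t => Real.exp (-(a * t)) * g t) (Ioi s) := by
    intro s hs
    have h0 : 0 < Real.sinh (a * s) := Real.sinh_pos_iff.2 (by positivity)
    have h1 := ((hinteg s hs).mono_set (Ioi_subset_Ioi (le_of_lt hs))).const_mul
      (a / Real.sinh (a * s))
    refine (integrableOn_congr_fun (fun t ht => ?_) measurableSet_Ioi).1 h1
    rw [hupp s t (le_of_lt ht)]
    field_simp
  refine ⟨fun s => ∫ t in (0 : ℝ)..s, Real.sinh (a * t) * g t,
    fun s => ∫ t in Ioi s, Real.exp (-(a * t)) * g t,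
    fun s hs => ⟨hP1 s hs, intervalIntegral.integral_of_le (le_of_lt hs)⟩,
    fun s hs => ⟨hQ1 s hs, rfl⟩, fun s hs => ?_, fun s hs => ?_, fun s hs => ?_⟩
  · have hc : ContinuousOn (fun t => Real.sinh (a * t) * g t) (Ioi 0) :=
      ContinuousOn.mul (by fun_prop) hg
    exact intervalIntegral.integral_hasDerivAt_right
      ((intervalIntegrable_iff_integrableOn_Ioc_of_le (le_of_lt hs)).2 (hP1 s hs))
      (hc.stronglyMeasurableAtFilter isOpen_Ioi s hs) (hc.continuousAt (Ioi_mem_nhds hs))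
  · have hc : ContinuousOn (fun t => Real.exp (-(a * t)) * g t) (Ioi 0) :=
      ContinuousOn.mul (by fun_prop) hg
    have hi : IntervalIntegrable (fun t => Real.exp (-(a * t)) * g t) volume 1 s := by
      refine (hc.mono ?_).intervalIntegrable
      intro x hx
      exact lt_of_lt_of_le (lt_min one_pos hs) hx.1
    have h1 := (intervalIntegral.integral_hasDerivAt_right hi
      (hc.stronglyMeasurableAtFilter isOpen_Ioi s hs) (hc.continuousAt (Ioi_mem_nhds hs))).const_sub
      (∫ t in Ioi 1, Real.exp (-(a * t)) * g t)
    refine h1.congr_of_eventuallyEq ?_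
    filter_upwards [Ioi_mem_nhds hs] with u hu
    rw [← intervalIntegral.integral_Ioi_sub_Ioi' (hQ1 1 one_pos) (hQ1 u hu)]
    ring
  · have h1 : ∫ t in Ioc 0 s, dirichletGreen a s t * g t =
        a⁻¹ * Real.exp (-(a * s)) * ∫ t in Ioc 0 s, Real.sinh (a * t) * g t := by
      rw [← integral_const_mul]
      refine setIntegral_congr_fun measurableSet_Ioc fun t ht => ?_
      simp only [hlow s t ht.2]; ring
    have h2 : ∫ t in Ioi s, dirichletGreen a s t * g t =
        a⁻¹ * Real.sinh (a * s) * ∫ t in Ioi s, Real.exp (-(a * t)) * g t := by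
      rw [← integral_const_mul]
      refine setIntegral_congr_fun measurableSet_Ioi fun t ht => ?_
      simp only [hupp s t (le_of_lt ht)]; ring
    have h3 := hinteg s hs
    rw [hw s hs, ← Ioc_union_Ioi_eq_Ioi (le_of_lt hs),
      setIntegral_union (Ioc_disjoint_Ioi le_rfl) measurableSet_Ioi
        (h3.mono_set Ioc_subset_Ioi_self) (h3.mono_set (Ioi_subset_Ioi (le_of_lt hs))), h1, h2]
    simp only [intervalIntegral.integral_of_le (le_of_lt hs)]
    field_simp

/-- Variation of constants: a function of the split form satisfies `w'' = a² w - g`. -/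
theorem hasDerivAt_of_split {a : ℝ} (ha : 0 < a) {g w P Q : ℝ → ℝ}
    (hP : ∀ s > 0, HasDerivAt P (Real.sinh (a * s) * g s) s)
    (hQ : ∀ s > 0, HasDerivAt Q (-(Real.exp (-(a * s)) * g s)) s)
    (hw : ∀ s > 0, a * w s = Real.exp (-(a * s)) * P s + Real.sinh (a * s) * Q s) :
    (∀ s > 0, HasDerivAt w (Real.cosh (a * s) * Q s - Real.exp (-(a * s)) * P s) s) ∧
    ∀ s > 0, HasDerivAt (fun s => Real.cosh (a * s) * Q s - Real.exp (-(a * s)) * P s)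
      (a ^ 2 * w s - g s) s := by
  have he : ∀ s, HasDerivAt (fun s => Real.exp (-(a * s))) (-a * Real.exp (-(a * s))) s := by
    intro s
    have := (((hasDerivAt_id s).const_mul a).neg).exp
    simpa [mul_comm] using this
  have hs' : ∀ s, HasDerivAt (fun s => Real.sinh (a * s)) (a * Real.cosh (a * s)) s := by
    intro s
    have := ((hasDerivAt_id s).const_mul a).sinh
    simpa [mul_comm] using this
  have hc' : ∀ s, HasDerivAt (fun s => Real.cosh (a * s)) (a * Real.sinh (a * s)) s := by
    intro s
    have := ((hasDerivAt_id s).const_mul a).cosh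
    simpa [mul_comm] using this
  constructor
  · intro s hs
    have h1 := ((((he s).mul (hP s hs)).add ((hs' s).mul (hQ s hs))).const_mul a⁻¹)
    have h2 := h1.congr_of_eventuallyEq (f₁ := w) (by
      filter_upwards [Ioi_mem_nhds hs] with u hu
      simp only [Pi.add_apply, Pi.mul_apply]
      rw [← hw u hu, inv_mul_cancel_left₀ ha.ne'])
    refine h2.congr_deriv ?_
    linear_combination (Real.cosh (a * s) * Q s - Real.exp (-(a * s)) * P s) *
      inv_mul_cancel₀ ha.ne'
  · intro s hs
    have h1 := ((hc' s).mul (hQ s hs)).sub ((he s).mul (hP s hs))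
    refine h1.congr_deriv ?_
    have h2 := hw s hs
    have h3 := Real.cosh_add_sinh (a * s)
    have h4 : Real.exp (a * s) * Real.exp (-(a * s)) = 1 := by rw [← Real.exp_add]; simp
    linear_combination -a * h2 - Real.exp (-(a * s)) * g s * h3 - g s * h4

/-! ### Decay at infinity -/

theorem hasDerivAt_exp_mul (b s : ℝ) :
    HasDerivAt (fun s => Real.exp (b * s)) (b * Real.exp (b * s)) s := by
  have := ((hasDerivAt_id s).const_mul b).exp
  simpa [mul_comm] using this

/-- A solution of `w'' ≥ b² w` that is bounded above decays: `exp (b s) w` is nonincreasing. Indeed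
`exp (-b s) (w' + b w)` is nondecreasing, so if `w' + b w` were ever positive, `w` would grow like
`exp (b s)`. -/
theorem antitoneOn_exp_mul_of_bounded {b B R : ℝ} (hb : 0 < b) {w w1 w2 : ℝ → ℝ}
    (hw : ∀ s ∈ Ici R, HasDerivAt w (w1 s) s) (hw1 : ∀ s ∈ Ici R, HasDerivAt w1 (w2 s) s)
    (hconv : ∀ s ∈ Ici R, b ^ 2 * w s ≤ w2 s) (hbdd : ∀ s ∈ Ici R, w s ≤ B) :
    AntitoneOn (fun s => Real.exp (b * s) * w s) (Ici R) := by
  have hv : MonotoneOn (fun s => Real.exp (-b * s) * (w1 s + b * w s)) (Ici R) := by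
    refine monotoneOn_of_hasDerivAt (convex_Ici R)
      (f' := fun s => Real.exp (-b * s) * (w2 s - b ^ 2 * w s)) (fun s hs => ?_) (fun s hs => ?_)
    · refine ((hasDerivAt_exp_mul (-b) s).mul
        ((hw1 s hs).add ((hw s hs).const_mul b))).congr_deriv ?_
      simp only [Pi.add_apply]
      ring
    · exact mul_nonneg (Real.exp_pos _).le (sub_nonneg.2 (hconv s hs))
  have hE : ∀ s ∈ Ici R, HasDerivAt (fun s => Real.exp (b * s) * w s)
      (Real.exp (b * s) * (w1 s + b * w s)) s := by
    intro s hs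
    refine ((hasDerivAt_exp_mul b s).mul (hw s hs)).congr_deriv ?_
    ring
  refine antitoneOn_of_hasDerivAt (convex_Ici R) hE fun t1 ht1 => ?_
  by_contra hneg
  push Not at hneg
  have hneg' : 0 < w1 t1 + b * w t1 := pos_of_mul_pos_right hneg (Real.exp_pos _).le
  set c := Real.exp (-b * t1) * (w1 t1 + b * w t1) with hc
  have hcpos : 0 < c := mul_pos (Real.exp_pos _) hneg'
  have hcv : ∀ t, t1 ≤ t → c ≤ Real.exp (-b * t) * (w1 t + b * w t) := fun t ht =>
    hv ht1 (mem_Ici.2 (le_trans ht1 ht)) ht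
  have hm : MonotoneOn (fun s => Real.exp (b * s) * w s - c / (2 * b) * Real.exp (2 * b * s))
      (Ici t1) := by
    refine monotoneOn_of_hasDerivAt (convex_Ici t1)
      (f' := fun s => Real.exp (b * s) * (w1 s + b * w s) - c * Real.exp (2 * b * s))
      (fun s hs => ?_) (fun s hs => ?_)
    · refine ((hE s (mem_Ici.2 (le_trans (mem_Ici.1 ht1) (mem_Ici.1 hs)))).sub
        ((hasDerivAt_exp_mul (2 * b) s).const_mul (c / (2 * b)))).congr_deriv ?_
      field_simp
    · have h1 := mul_le_mul_of_nonneg_right (hcv s hs) (Real.exp_pos (2 * b * s)).le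
      have h2 : Real.exp (-b * s) * Real.exp (2 * b * s) = Real.exp (b * s) := by
        rw [← Real.exp_add]; congr 1; ring
      rw [mul_right_comm (Real.exp (-b * s)), h2] at h1
      linarith
  have hB : 0 ≤ max B 0 := le_max_right _ _
  -- `e^{b t}` grows without bound, while the inequality below bounds it
  obtain ⟨t, ht, hbig⟩ : ∃ t, t1 ≤ t ∧
      2 * b / c * (max B 0 + |Real.exp (b * t1) * w t1 - c / (2 * b) * Real.exp (2 * b * t1)|)
        + 1 < Real.exp (b * t) := by
    have h1 : Tendsto (fun t => Real.exp (b * t)) atTop atTop :=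
      Real.tendsto_exp_atTop.comp (tendsto_id.const_mul_atTop hb)
    obtain ⟨t, h2, h3⟩ := ((h1.eventually_gt_atTop _).and (eventually_ge_atTop t1)).exists
    exact ⟨t, h3, h2⟩
  have h1 := hm (mem_Ici.2 le_rfl) (mem_Ici.2 ht) ht
  set D := Real.exp (b * t1) * w t1 - c / (2 * b) * Real.exp (2 * b * t1) with hD
  set X := Real.exp (b * t) with hX
  have h2 : Real.exp (2 * b * t) = X * X := by
    rw [hX, ← Real.exp_add]; congr 1; ring
  simp only [h2] at h1
  have h3 : X * w t ≤ X * max B 0 :=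
    mul_le_mul_of_nonneg_left ((hbdd t (le_trans ht1 ht)).trans (le_max_left _ _))
      (Real.exp_pos _).le
  have hD' : -|D| ≤ D := neg_abs_le D
  have hX1 : 1 ≤ X := by
    have : 0 ≤ 2 * b / c * (max B 0 + |D|) := by positivity
    linarith
  have h4 : c / (2 * b) * (X * X) ≤ X * (max B 0 + |D|) := by
    have : |D| ≤ X * |D| := le_mul_of_one_le_left (abs_nonneg D) hX1
    simp only [← hD] at h1
    linarith
  have h5 : c / (2 * b) * X ≤ max B 0 + |D| := by
    have : X * (c / (2 * b) * X) ≤ X * (max B 0 + |D|) := by linarith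
    exact le_of_mul_le_mul_left this (by linarith)
  have h6 : X ≤ 2 * b / c * (max B 0 + |D|) := by
    have h7 := mul_le_mul_of_nonneg_left h5 (show 0 ≤ 2 * b / c by positivity)
    have h8 : 2 * b / c * (c / (2 * b) * X) = X := by field_simp
    linarith
  linarith

/-- Sharp exponential decay: `exp (a s) w` is nondecreasing and bounded. -/
theorem exp_mul_bounded_of_split {n a β K : ℝ} (hn0 : 0 < n) (ha : 0 < a) (hβ : 0 < β)
    {w P Q : ℝ → ℝ} (hpos : ∀ s > 0, 0 < w s) (hK : ∀ s > 0, w s ^ 2 ≤ K)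
    (hQ : ∀ s > 0, IntegrableOn (fun t => Real.exp (-(a * t)) * (β * t ^ (-n) * w t ^ 3)) (Ioi s) ∧
        Q s = ∫ t in Ioi s, Real.exp (-(a * t)) * (β * t ^ (-n) * w t ^ 3))
    (hQ0 : ∀ s > 0, 0 ≤ Q s)
    (hw : ∀ s > 0, a * w s = Real.exp (-(a * s)) * P s + Real.sinh (a * s) * Q s)
    (hw' : ∀ s > 0, HasDerivAt w (Real.cosh (a * s) * Q s - Real.exp (-(a * s)) * P s) s)
    (hw'' : ∀ s > 0, HasDerivAt (fun s => Real.cosh (a * s) * Q s - Real.exp (-(a * s)) * P s)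
      (a ^ 2 * w s - β * s ^ (-n) * w s ^ 3) s) :
    MonotoneOn (fun s => Real.exp (a * s) * w s) (Ioi 0) ∧
      ∃ M, ∀ s > 0, Real.exp (a * s) * w s ≤ M := by
  have hy : ∀ s > 0, HasDerivAt (fun s => Real.exp (a * s) * w s)
      (Real.exp (2 * a * s) * Q s) s := by
    intro s hs
    refine ((hasDerivAt_exp_mul a s).mul (hw' s hs)).congr_deriv ?_
    have h1 := Real.cosh_add_sinh (a * s)
    have h2 : Real.exp (2 * a * s) = Real.exp (a * s) * Real.exp (a * s) := by
      rw [← Real.exp_add]; congr 1; ring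
    rw [h2]
    linear_combination Real.exp (a * s) * hw s hs + Real.exp (a * s) * Q s * h1
  have hmono : MonotoneOn (fun s => Real.exp (a * s) * w s) (Ioi 0) :=
    monotoneOn_of_hasDerivAt (convex_Ioi 0) hy
      fun s hs => mul_nonneg (Real.exp_pos _).le (hQ0 s hs)
  refine ⟨hmono, ?_⟩
  have hq : Tendsto (fun t : ℝ => β * K * t ^ (-n)) atTop (𝓝 (β * K * 0)) :=
    (tendsto_rpow_neg_atTop hn0).const_mul _
  rw [mul_zero] at hq
  -- past `R` the coefficient `β t ^ (-n) w ^ 2` is at most `3/4 a²`, leaving `w'' ≥ (a/2)² w`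
  obtain ⟨R, hR⟩ := eventually_atTop.1
    ((hq.eventually_le_const (show 0 < 3 / 4 * a ^ 2 by positivity)).and (eventually_ge_atTop 1))
  have hR1 : 1 ≤ R := (hR R le_rfl).2
  have hpR : ∀ t ∈ Ici R, 0 < t := fun t ht => by linarith [(hR t ht).2]
  have hKw : ∀ t > 0, w t ≤ 1 + K := fun t ht => by nlinarith [hK t ht, sq_nonneg (w t - 1)]
  have hanti : AntitoneOn (fun s => Real.exp (a / 2 * s) * w s) (Ici R) := by
    refine antitoneOn_exp_mul_of_bounded (half_pos ha) (fun s hs => hw' s (hpR s hs))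
      (fun s hs => hw'' s (hpR s hs)) (fun s hs => ?_) (fun s hs => hKw s (hpR s hs))
    have h0 := hpR s hs
    have h1 := (hR s hs).1
    have h2 : β * s ^ (-n) * w s ^ 2 ≤ β * s ^ (-n) * K :=
      mul_le_mul_of_nonneg_left (hK s h0) (by positivity)
    have h3 : (β * s ^ (-n) * w s ^ 2) * w s ≤ (3 / 4 * a ^ 2) * w s :=
      mul_le_mul_of_nonneg_right (by linarith) (hpos s h0).le
    linarith
  set C := Real.exp (a / 2 * R) * w R with hC
  have hR0 : 0 < R := by linarith
  have hCpos : 0 < C := mul_pos (Real.exp_pos _) (hpos R hR0)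
  have hwC : ∀ t ∈ Ici R, w t ≤ C * Real.exp (-(a / 2 * t)) := by
    intro t ht
    have h1 : Real.exp (a / 2 * t) * w t ≤ C := hanti (mem_Ici.2 le_rfl) ht ht
    rw [Real.exp_neg, ← div_eq_mul_inv, le_div_iff₀ (Real.exp_pos _)]
    linarith
  have hQle : ∀ s ∈ Ici R, Q s ≤ β * C ^ 3 * (2 / (5 * a)) * Real.exp (-(5 / 2 * a) * s) := by
    intro s hs
    have hc : -(5 / 2 * a) < 0 := by linarith
    have h1 : Q s ≤ ∫ t in Ioi s, β * C ^ 3 * Real.exp (-(5 / 2 * a) * t) := by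
      rw [(hQ s (hpR s hs)).2]
      refine setIntegral_mono_on (hQ s (hpR s hs)).1
        ((integrableOn_exp_mul_Ioi hc s).const_mul _) measurableSet_Ioi fun t ht => ?_
      have htR : t ∈ Ici R := le_trans (mem_Ici.1 hs) (le_of_lt ht)
      have ht0 := hpR t htR
      have h2 : t ^ (-n) ≤ 1 := Real.rpow_le_one_of_one_le_of_nonpos (hR t htR).2 (by linarith)
      have h3 : w t ^ 3 ≤ (C * Real.exp (-(a / 2 * t))) ^ 3 :=
        pow_le_pow_left₀ (hpos t ht0).le (hwC t htR) 3
      have h4 : Real.exp (-(a * t)) * Real.exp (-(a / 2 * t)) ^ 3 =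
          Real.exp (-(5 / 2 * a) * t) := by
        rw [← Real.exp_nat_mul, ← Real.exp_add]; congr 1; push_cast; ring
      have h5 : β * t ^ (-n) * w t ^ 3 ≤ β * 1 * (C * Real.exp (-(a / 2 * t))) ^ 3 := by
        have := hpos t ht0
        gcongr
      calc Real.exp (-(a * t)) * (β * t ^ (-n) * w t ^ 3)
          ≤ Real.exp (-(a * t)) * (β * 1 * (C * Real.exp (-(a / 2 * t))) ^ 3) :=
            mul_le_mul_of_nonneg_left h5 (Real.exp_pos _).le
        _ = β * C ^ 3 * Real.exp (-(5 / 2 * a) * t) := by rw [← h4]; ring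
    rw [integral_const_mul, integral_exp_mul_Ioi hc] at h1
    refine h1.trans_eq ?_
    field_simp
  set D := β * C ^ 3 * (2 / (5 * a)) with hD
  have hDpos : 0 < D := by positivity
  -- the derivative of `exp (a s) w` is at most `D exp (-a s / 2)`, which is integrated explicitly
  have hz : AntitoneOn (fun s => Real.exp (a * s) * w s + 2 * D / a * Real.exp (-(a / 2) * s))
      (Ici R) := by
    refine antitoneOn_of_hasDerivAt (convex_Ici R)
      (f' := fun s => Real.exp (2 * a * s) * Q s - D * Real.exp (-(a / 2) * s))
      (fun s hs => ?_) (fun s hs => ?_)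
    · refine ((hy s (hpR s hs)).add
        ((hasDerivAt_exp_mul (-(a / 2)) s).const_mul (2 * D / a))).congr_deriv ?_
      field_simp
      ring
    · have h1 := mul_le_mul_of_nonneg_left (hQle s hs) (Real.exp_pos (2 * a * s)).le
      have h2 : Real.exp (2 * a * s) * Real.exp (-(5 / 2 * a) * s) = Real.exp (-(a / 2) * s) := by
        rw [← Real.exp_add]; congr 1; ring
      rw [mul_left_comm, h2] at h1
      linarith
  refine ⟨Real.exp (a * R) * w R + 2 * D / a * Real.exp (-(a / 2) * R), fun s hs => ?_⟩
  have hnn : ∀ s, 0 ≤ 2 * D / a * Real.exp (-(a / 2) * s) := fun s => by positivity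
  rcases le_total s R with h | h
  · have h1 := hmono hs hR0 h
    simp only at h1
    linarith [hnn R]
  · have h1 := hz (mem_Ici.2 le_rfl) h h
    simp only at h1
    linarith [hnn s]

/-! ### Behaviour at the origin -/

theorem sinh_le_self_mul_cosh {x : ℝ} (hx : 0 ≤ x) : Real.sinh x ≤ x * Real.cosh x := by
  have h : MonotoneOn (fun x => x * Real.cosh x - Real.sinh x) (Ici 0) := by
    refine monotoneOn_of_hasDerivAt (convex_Ici 0) (f' := fun x => x * Real.sinh x)
      (fun x _ => ?_) (fun x hx => mul_nonneg hx (Real.sinh_nonneg_iff.2 hx))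
    refine (((hasDerivAt_id x).mul (Real.hasDerivAt_cosh x)).sub
      (Real.hasDerivAt_sinh x)).congr_deriv ?_
    simp
  have h1 := h (mem_Ici.2 le_rfl) (mem_Ici.2 hx) hx
  simp only [zero_mul, Real.sinh_zero, sub_zero] at h1
  linarith

theorem sinh_le_self_mul_exp {x : ℝ} (hx : 0 ≤ x) : Real.sinh x ≤ x * Real.exp x :=
  (sinh_le_self_mul_cosh hx).trans <| mul_le_mul_of_nonneg_left (by
    have := Real.cosh_add_sinh x
    have := Real.sinh_nonneg_iff.2 hx
    linarith) hx

/-- Linear vanishing at the origin: `w s / s` has a positive limit as `s → 0⁺`. -/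
theorem tendsto_div_of_split {n a β K : ℝ} (hn3 : n < 3) (ha : 0 < a) (hβ : 0 < β) (hK0 : 0 < K)
    {w P Q : ℝ → ℝ} (hpos : ∀ s > 0, 0 < w s) (hK : ∀ s > 0, w s ^ 2 ≤ K * s)
    (hP : ∀ s > 0, IntegrableOn (fun t => Real.sinh (a * t) * (β * t ^ (-n) * w t ^ 3)) (Ioc 0 s) ∧
        P s = ∫ t in Ioc 0 s, Real.sinh (a * t) * (β * t ^ (-n) * w t ^ 3))
    (hQ0 : ∀ s > 0, 0 ≤ Q s)
    (hw : ∀ s > 0, a * w s = Real.exp (-(a * s)) * P s + Real.sinh (a * s) * Q s)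
    (hw' : ∀ s > 0, HasDerivAt w (Real.cosh (a * s) * Q s - Real.exp (-(a * s)) * P s) s)
    (hmono : MonotoneOn (fun s => Real.exp (a * s) * w s) (Ioi 0)) :
    ∃ ℓ > 0, Tendsto (fun s => w s / s) (𝓝[>] 0) (𝓝 ℓ) := by
  have h3n : 0 < 3 - n := by linarith
  have hP0 : ∀ s > 0, 0 ≤ P s := by
    intro s hs
    rw [(hP s hs).2]
    refine setIntegral_nonneg measurableSet_Ioc fun t ht => ?_
    have ht0 : 0 < t := ht.1
    have h1 := hpos t ht0
    have h2 : 0 ≤ Real.sinh (a * t) := Real.sinh_nonneg_iff.2 (by positivity)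
    positivity
  set C := a * Real.exp a * (β * K * Real.exp a) / (3 - n) with hC
  have hPle : ∀ s > 0, s ≤ 1 → P s ≤ C * s ^ (3 - n) * w s := by
    intro s hs hs1
    have hinteg : IntegrableOn (fun t : ℝ => t ^ (2 - n)) (Ioc 0 s) :=
      (intervalIntegrable_iff_integrableOn_Ioc_of_le hs.le).1
        (intervalIntegral.intervalIntegrable_rpow' (by linarith))
    have h1 : P s ≤ ∫ t in Ioc 0 s,
        (a * Real.exp a * (β * K * Real.exp a) * w s) * t ^ (2 - n) := by
      rw [(hP s hs).2]
      refine setIntegral_mono_on (hP s hs).1 (hinteg.const_mul _) measurableSet_Ioc fun t ht => ?_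
      have ht0 : 0 < t := ht.1
      have hwt := hpos t ht0
      have hws := hpos s hs
      have h2 : Real.sinh (a * t) ≤ a * t * Real.exp a := by
        refine (sinh_le_self_mul_exp (by positivity)).trans ?_
        have : Real.exp (a * t) ≤ Real.exp a :=
          Real.exp_le_exp.2 (by nlinarith [ht.2])
        exact mul_le_mul_of_nonneg_left this (by positivity)
      have h3 : w t ≤ Real.exp a * w s := by
        have h4 : Real.exp (a * t) * w t ≤ Real.exp (a * s) * w s := hmono ht0 hs ht.2
        have h5 : w t ≤ Real.exp (a * t) * w t :=
          le_mul_of_one_le_left hwt.le (Real.one_le_exp (by positivity))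
        have h6 : Real.exp (a * s) * w s ≤ Real.exp a * w s :=
          mul_le_mul_of_nonneg_right (Real.exp_le_exp.2 (by nlinarith)) hws.le
        linarith
      have h4 : w t ^ 3 ≤ K * t * (Real.exp a * w s) := by
        rw [pow_succ]
        exact mul_le_mul (hK t ht0) h3 hwt.le (by positivity)
      have h5 : t ^ (2 - n) = t ^ (-n) * t * t := by
        rw [show (2 : ℝ) - n = -n + 1 + 1 by ring, Real.rpow_add_one ht0.ne',
          Real.rpow_add_one ht0.ne']
      calc Real.sinh (a * t) * (β * t ^ (-n) * w t ^ 3)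
          ≤ (a * t * Real.exp a) * (β * t ^ (-n) * (K * t * (Real.exp a * w s))) := by
            gcongr
        _ = _ := by rw [h5]; ring
    rw [integral_const_mul, ← intervalIntegral.integral_of_le hs.le,
      integral_rpow (Or.inl (by linarith)), show (2 : ℝ) - n + 1 = 3 - n by ring,
      Real.zero_rpow h3n.ne', sub_zero] at h1
    refine h1.trans_eq ?_
    rw [hC]; ring
  have hp : ∀ s > 0, HasDerivAt (fun s => w s / s)
      ((s * (Real.cosh (a * s) * Q s - Real.exp (-(a * s)) * P s) - w s) / s ^ 2) s := by
    intro s hs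
    refine ((hw' s hs).div (hasDerivAt_id s) hs.ne').congr_deriv ?_
    simp only [id]
    ring
  -- numerator of the derivative of `w s / s`, in terms of the two one-sided integrals
  have hnum : ∀ s > 0, a * (s * (Real.cosh (a * s) * Q s - Real.exp (-(a * s)) * P s) - w s) =
      (a * s * Real.cosh (a * s) - Real.sinh (a * s)) * Q s
        - (a * s + 1) * (Real.exp (-(a * s)) * P s) := by
    intro s hs
    linear_combination -hw s hs
  set C1 := (a + 1) * C / a with hC1
  have hCpos : 0 < C := by positivity
  have hC1pos : 0 < C1 := by positivity
  have hlow : ∀ s > 0, s ≤ 1 → -(C1 * s ^ (2 - n) * (w s / s)) ≤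
      (s * (Real.cosh (a * s) * Q s - Real.exp (-(a * s)) * P s) - w s) / s ^ 2 := by
    intro s hs hs1
    have h1 : 0 ≤ (a * s * Real.cosh (a * s) - Real.sinh (a * s)) * Q s :=
      mul_nonneg (sub_nonneg.2 (sinh_le_self_mul_cosh (by positivity))) (hQ0 s hs)
    have h2 : (a * s + 1) * (Real.exp (-(a * s)) * P s) ≤
        (a + 1) * (1 * (C * s ^ (3 - n) * w s)) := by
      have h3 : Real.exp (-(a * s)) ≤ 1 := Real.exp_le_one_iff.2 (by
        have : 0 < a * s := by positivity
        linarith)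
      have h4 := hPle s hs hs1
      have h5 := hP0 s hs
      have h6 : a * s ≤ a := by nlinarith
      gcongr
    have h5 : s ^ (3 - n) = s ^ (2 - n) * s := by
      rw [show (3 : ℝ) - n = 2 - n + 1 by ring, Real.rpow_add_one hs.ne']
    rw [h5] at h2
    rw [le_div_iff₀ (by positivity)]
    refine le_of_mul_le_mul_left ?_ ha
    rw [hnum s hs]
    have h6 : a * (-(C1 * s ^ (2 - n) * (w s / s)) * s ^ 2) =
        -((a + 1) * (1 * (C * (s ^ (2 - n) * s) * w s))) := by
      rw [hC1]; field_simp
    linarith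
  -- from `x cosh x - sinh x ≤ x sinh x` and `sinh (a s) Q ≤ a w`
  have hupp : ∀ s > 0,
      (s * (Real.cosh (a * s) * Q s - Real.exp (-(a * s)) * P s) - w s) / s ^ 2 ≤
        a * (w s / s) := by
    intro s hs
    have has : 0 < a * s := by positivity
    rw [div_le_iff₀ (by positivity)]
    refine le_of_mul_le_mul_left ?_ ha
    rw [hnum s hs]
    have h1 : a * s * Real.cosh (a * s) - Real.sinh (a * s) ≤ a * s * Real.sinh (a * s) := by
      have h2 := Real.cosh_sub_sinh (a * s)
      have h3 := Real.self_le_sinh_iff.2 has.le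
      have h4 : Real.exp (-(a * s)) ≤ 1 := Real.exp_le_one_iff.2 (by linarith)
      nlinarith
    have h2 := mul_le_mul_of_nonneg_right h1 (hQ0 s hs)
    have h3 : 0 ≤ Real.exp (-(a * s)) * P s := mul_nonneg (Real.exp_pos _).le (hP0 s hs)
    have h4 : Real.sinh (a * s) * Q s ≤ a * w s := by linarith [hw s hs]
    have h5 := mul_le_mul_of_nonneg_left h4 has.le
    have h6 : 0 ≤ (a * s + 1) * (Real.exp (-(a * s)) * P s) := by positivity
    have h7 : a * (a * (w s / s) * s ^ 2) = a * s * (a * w s) := by field_simp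
    linarith
  have hE : ∀ s > 0, HasDerivAt (fun s : ℝ => Real.exp (C1 / (3 - n) * s ^ (3 - n)))
      (Real.exp (C1 / (3 - n) * s ^ (3 - n)) * (C1 * s ^ (2 - n))) s := by
    intro s hs
    refine ((Real.hasDerivAt_rpow_const (p := 3 - n) (Or.inl hs.ne')).const_mul
      (C1 / (3 - n))).exp.congr_deriv ?_
    rw [show (3 : ℝ) - n - 1 = 2 - n by ring]
    field_simp
  have hφ : MonotoneOn (fun s => w s / s * Real.exp (C1 / (3 - n) * s ^ (3 - n))) (Ioc 0 1) := by
    refine monotoneOn_of_hasDerivAt (convex_Ioc 0 1)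
      (fun s hs => (hp s hs.1).mul (hE s hs.1)) fun s hs => ?_
    have h1 := hlow s hs.1 hs.2
    have h2 := mul_nonneg (Real.exp_pos (C1 / (3 - n) * s ^ (3 - n))).le
      (neg_le_iff_add_nonneg.1 h1)
    linarith
  have hψ : AntitoneOn (fun s => w s / s * Real.exp (-a * s)) (Ioc 0 1) := by
    refine antitoneOn_of_hasDerivAt (convex_Ioc 0 1)
      (fun s hs => (hp s hs.1).mul (hasDerivAt_exp_mul (-a) s)) fun s hs => ?_
    have h1 := mul_le_mul_of_nonneg_right (hupp s hs.1) (Real.exp_pos (-a * s)).le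
    linarith
  -- truncating at `1` turns the monotone function on `(0, 1]` into one on `(0, ∞)`
  have hmin : MonotoneOn (fun s => (fun s => w s / s * Real.exp (C1 / (3 - n) * s ^ (3 - n)))
      (min s 1)) (Ioi 0) := fun x hx y hy hxy =>
    hφ ⟨lt_min hx one_pos, min_le_right _ _⟩ ⟨lt_min hy one_pos, min_le_right _ _⟩
      (min_le_min_right _ hxy)
  have hlim := hmin.tendsto_nhdsGT ⟨0, by
    rintro _ ⟨x, hx, rfl⟩
    have h0 : 0 < min x 1 := lt_min hx one_pos
    have := hpos _ h0
    positivity⟩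
  set ℓ := sInf ((fun s => (fun s => w s / s * Real.exp (C1 / (3 - n) * s ^ (3 - n)))
      (min s 1)) '' Ioi 0) with hℓ
  have hev : ∀ᶠ s : ℝ in 𝓝[>] 0, s ∈ Ioc (0 : ℝ) 1 := Ioc_mem_nhdsGT one_pos
  have hexp : Tendsto (fun s : ℝ => Real.exp (-(C1 / (3 - n) * s ^ (3 - n)))) (𝓝[>] 0) (𝓝 1) := by
    have h1 : ContinuousAt (fun s : ℝ => Real.exp (-(C1 / (3 - n) * s ^ (3 - n)))) 0 := by
      have := Real.continuousAt_rpow_const 0 (3 - n) (Or.inr h3n.le)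
      exact (this.const_mul _).neg.rexp
    have h2 := h1.tendsto
    simp only [Real.zero_rpow h3n.ne', mul_zero, neg_zero, Real.exp_zero] at h2
    exact h2.mono_left nhdsWithin_le_nhds
  have hlim' : Tendsto (fun s => w s / s) (𝓝[>] 0) (𝓝 (ℓ * 1)) := by
    refine (hlim.mul hexp).congr' ?_
    filter_upwards [hev] with s hs
    simp only [min_eq_left hs.2]
    rw [mul_assoc, ← Real.exp_add, add_neg_cancel, Real.exp_zero, mul_one]
  rw [mul_one] at hlim'
  refine ⟨ℓ, ?_, hlim'⟩
  have h1 : 0 < w 1 / 1 * Real.exp (-a * 1) :=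
    mul_pos (div_pos (hpos 1 one_pos) one_pos) (Real.exp_pos _)
  refine lt_of_lt_of_le h1 (ge_of_tendsto hlim' ?_)
  filter_upwards [hev] with s hs
  have h2 := hψ hs ⟨one_pos, le_rfl⟩ hs.2
  refine h2.trans (mul_le_of_le_one_right (div_pos (hpos s hs.1) hs.1).le ?_)
  exact Real.exp_le_one_iff.2 (by nlinarith [hs.1])

/-! ### The Bessel operator and the solution -/

theorem contDiffOn_two_of_hasDerivAt {D : Set ℝ} (hD : IsOpen D) {w w1 w2 : ℝ → ℝ}
    (h1 : ∀ s ∈ D, HasDerivAt w (w1 s) s) (h2 : ∀ s ∈ D, HasDerivAt w1 (w2 s) s)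
    (hc : ContinuousOn w2 D) : ContDiffOn ℝ 2 w D := by
  have hw1 : ContDiffOn ℝ 1 w1 D := by
    rw [show (1 : WithTop ℕ∞) = 0 + 1 by norm_num, contDiffOn_succ_iff_deriv_of_isOpen hD]
    refine ⟨fun s hs => (h2 s hs).differentiableAt.differentiableWithinAt, by simp, ?_⟩
    exact contDiffOn_zero.2 (hc.congr fun s hs => (h2 s hs).deriv)
  rw [show (2 : WithTop ℕ∞) = 1 + 1 by norm_num, contDiffOn_succ_iff_deriv_of_isOpen hD]
  exact ⟨fun s hs => (h1 s hs).differentiableAt.differentiableWithinAt, by simp,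
    hw1.congr fun s hs => (h1 s hs).deriv⟩

/-- Conjugating by `r ^ (-k)` turns the Bessel operator into the ordinary derivative. -/
theorem besselOp_rpow_neg_mul {k s u' : ℝ} {u v : ℝ → ℝ} (hs : 0 < s)
    (hv : ∀ᶠ r in 𝓝 s, v r = r ^ (-k) * u r) (hu : HasDerivAt u u' s) :
    besselOp k v s = s ^ (-k) * u' := by
  have h1 : HasDerivAt v _ s :=
    ((Real.hasDerivAt_rpow_const (p := -k) (Or.inl hs.ne')).mul hu).congr_of_eventuallyEq hv
  rw [besselOp, h1.deriv, hv.self_of_nhds, Real.rpow_sub_one hs.ne']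
  field_simp
  ring

end

/-- For `0 < n < 3`, `c₀ > 0`, `c₃ < 0`, the nonautonomous real
Ginzburg–Landau equation `𝒟_{n/2}𝒟_{n/2}A = c₀ A + c₃ A³` has a positive `C²` solution on
`(0,∞)` with `s^{(n−2)/2}A(s)` tending to a positive limit as `s → 0⁺`, `A(s) → 0` as
`s → ∞`, and `sup_{s ≥ 1} s^{n/2} e^{√c₀ s} A(s) < ∞`. -/
theorem ginzburgLandau_localised_solution (n c₀ c₃ : ℝ)
    (hn0 : 0 < n) (hn3 : n < 3) (hc₀ : 0 < c₀) (hc₃ : c₃ < 0) :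
    ∃ A : ℝ → ℝ,
      ContDiffOn ℝ 2 A (Set.Ioi 0) ∧
      (∀ s > (0 : ℝ), 0 < A s) ∧
      (∀ s > (0 : ℝ), besselOp (n / 2) (besselOp (n / 2) A) s = c₀ * A s + c₃ * A s ^ 3) ∧
      (∃ L > (0 : ℝ),
        Tendsto (fun s : ℝ => s ^ ((n - 2) / 2) * A s) (nhdsWithin 0 (Set.Ioi 0)) (nhds L)) ∧
      Tendsto A atTop (nhds 0) ∧
      (∃ M : ℝ, ∀ s ≥ (1 : ℝ), s ^ (n / 2) * Real.exp (Real.sqrt c₀ * s) * A s ≤ M) := by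
  have ha : 0 < Real.sqrt c₀ := Real.sqrt_pos.2 hc₀
  have ha2 : Real.sqrt c₀ ^ 2 = c₀ := Real.sq_sqrt hc₀.le
  have hβ : 0 < -c₃ := neg_pos.2 hc₃
  set a := Real.sqrt c₀ with ha_def
  set β := -c₃ with hβ_def
  obtain ⟨w, hwc, hpos, ⟨K, hK0, hK⟩, hw⟩ := exists_integral_solution hn0 hn3 ha hβ
  have hg : ContinuousOn (fun t : ℝ => β * t ^ (-n) * w t ^ 3) (Set.Ioi 0) := by
    refine (continuousOn_const.mul (continuousOn_id.rpow_const fun t ht => ?_)).mul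
      (hwc.pow 3).continuousOn
    exact Or.inl (ne_of_gt ht)
  obtain ⟨P, Q, hP, hQ, hP', hQ', hsplit⟩ :=
    greenPotential_split ha hg (fun s hs => (hw s hs).1) (fun s hs => (hw s hs).2)
  obtain ⟨hw', hw''⟩ := hasDerivAt_of_split ha hP' hQ' hsplit
  have hQ0 : ∀ s > 0, 0 ≤ Q s := by
    intro s hs
    rw [(hQ s hs).2]
    refine MeasureTheory.setIntegral_nonneg measurableSet_Ioi fun t ht => ?_
    have ht0 : 0 < t := lt_trans hs ht
    have := hpos t ht0
    positivity
  obtain ⟨hmono, M, hM⟩ := exp_mul_bounded_of_split hn0 ha hβ hpos (fun s hs => (hK s hs).2)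
    hQ hQ0 hsplit hw' hw''
  obtain ⟨ℓ, hℓ, hlim⟩ := tendsto_div_of_split hn3 ha hβ hK0 hpos (fun s hs => (hK s hs).1)
    hP hQ0 hsplit hw' hmono
  have hM' : ∀ s > 0, w s ≤ M := fun s hs =>
    (le_mul_of_one_le_left (hpos s hs).le (Real.one_le_exp (by positivity))).trans (hM s hs)
  refine ⟨fun s => s ^ (-(n / 2)) * w s, ?_, ?_, ?_, ⟨ℓ, hℓ, ?_⟩, ?_, ⟨M, ?_⟩⟩
  · refine ContDiffOn.mul (fun s hs => ?_) (contDiffOn_two_of_hasDerivAt isOpen_Ioi hw' hw''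
      ((hwc.continuousOn.const_mul _).sub hg))
    exact (Real.contDiffAt_rpow_const_of_ne (ne_of_gt hs)).contDiffWithinAt
  · intro s hs
    have := hpos s hs
    positivity
  · intro s hs
    rw [besselOp_rpow_neg_mul hs _ (hw'' s hs)]
    · have h1 : (s ^ (-(n / 2))) ^ 3 = s ^ (-(n / 2)) * s ^ (-n) := by
        rw [← Real.rpow_natCast, ← Real.rpow_mul hs.le, ← Real.rpow_add hs]
        congr 1; push_cast; ring
      simp only [mul_pow, h1, ha2, hβ_def]
      ring
    · filter_upwards [Ioi_mem_nhds hs] with r hr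
      exact besselOp_rpow_neg_mul hr (Eventually.of_forall fun _ => rfl) (hw' r hr)
  · refine hlim.congr' ?_
    filter_upwards [self_mem_nhdsWithin] with s hs
    have hs0 : 0 < s := hs
    rw [← mul_assoc, ← Real.rpow_add hs0, show (n - 2) / 2 + -(n / 2) = -1 by ring,
      Real.rpow_neg_one]
    ring
  · have h1 : Tendsto (fun s : ℝ => s ^ (-(n / 2)) * M) atTop (nhds (0 * M)) :=
      (tendsto_rpow_neg_atTop (by linarith)).mul_const M
    rw [zero_mul] at h1
    refine tendsto_of_tendsto_of_tendsto_of_le_of_le' tendsto_const_nhds h1 ?_ ?_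
    · filter_upwards [eventually_gt_atTop 0] with s hs
      have := hpos s hs
      positivity
    · filter_upwards [eventually_gt_atTop 0] with s hs
      exact mul_le_mul_of_nonneg_left (hM' s hs) (by positivity)
  · intro s hs
    have hs0 : 0 < s := by linarith
    have h1 : s ^ (n / 2) * s ^ (-(n / 2)) = 1 := by
      rw [← Real.rpow_add hs0, add_neg_cancel, Real.rpow_zero]
    calc s ^ (n / 2) * Real.exp (a * s) * (s ^ (-(n / 2)) * w s)
        = (s ^ (n / 2) * s ^ (-(n / 2))) * (Real.exp (a * s) * w s) := by ring
      _ ≤ M := by rw [h1, one_mul]; exact hM s hs0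
end

section
/- Let n > 0 be real and let v ∈ C²((0,∞), ℝ) satisfy v''(r) + (2/r)v'(r) = v(r) + r^{2−n} v(r)³ for all r > 0. Assume that ∫₀^∞ (v'(r)² + v(r)² + r^{2−n} v(r)⁴) r² dr < ∞ and that r² v(r) v'(r) → 0 both as r → 0⁺ and as r → ∞. Then v(r) = 0 for all r > 0. (This is the statement that when the cubic coefficient is positive, the only localised solution of the Ginzburg–Landau equation is the trivial one.) -/
open Filter MeasureTheory

/-!
The function `W r = r² v(r) v'(r)` has, by the equation,
`W' = r² (v'² + v² + r^{2-n} v⁴) ≥ 0` on `(0,∞)`, so it is monotone there. As `W` tends to `0` at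
both ends of the half-line, it vanishes identically; hence `W' = 0`, and the three nonnegative
terms of `W'` vanish separately. This is the usual energy identity obtained by testing the equation
against `v`, in pointwise form.
-/

/-- When the cubic coefficient is positive, the only localised solution of
the Ginzburg–Landau equation is trivial: if `v ∈ C²((0,∞))` satisfies
`v'' + (2/r)v' = v + r^{2−n}v³` on `(0,∞)`, with
`∫₀^∞ (v'² + v² + r^{2−n}v⁴) r² dr < ∞` and `r²vv' → 0` as `r → 0⁺` and `r → ∞`,
then `v ≡ 0` on `(0,∞)`. -/
theorem positive_cubic_trivial (n : ℝ) (hn : 0 < n) (v : ℝ → ℝ)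
    (hvreg : ContDiffOn ℝ 2 v (Set.Ioi 0))
    (hode : ∀ r > (0 : ℝ),
      deriv (deriv v) r + (2 / r) * deriv v r = v r + r ^ (2 - n) * v r ^ 3)
    (hint : IntegrableOn
      (fun r : ℝ => (deriv v r ^ 2 + v r ^ 2 + r ^ (2 - n) * v r ^ 4) * r ^ 2)
      (Set.Ioi 0))
    (hbdry0 : Tendsto (fun r : ℝ => r ^ 2 * v r * deriv v r)
      (nhdsWithin 0 (Set.Ioi 0)) (nhds 0))
    (hbdryTop : Tendsto (fun r : ℝ => r ^ 2 * v r * deriv v r) atTop (nhds 0)) :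
    ∀ r > (0 : ℝ), v r = 0 := by
  have hd1 : ∀ r > (0 : ℝ), HasDerivAt v (deriv v r) r := fun r hr =>
    ((hvreg.differentiableOn (by norm_num)).differentiableAt (Ioi_mem_nhds hr)).hasDerivAt
  have hd2 : ∀ r > (0 : ℝ), HasDerivAt (deriv v) (deriv (deriv v) r) r := fun r hr =>
    (((contDiffOn_succ_iff_deriv_of_isOpen (n := 1) isOpen_Ioi).1
      (by simpa [one_add_one_eq_two] using hvreg)).2.2.differentiableOn
      (by norm_num)).differentiableAt (Ioi_mem_nhds hr) |>.hasDerivAt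
  set W : ℝ → ℝ := fun r => r ^ 2 * v r * deriv v r with hW
  have hWd : ∀ r > (0 : ℝ), HasDerivAt W
      ((deriv v r ^ 2 + v r ^ 2 + r ^ (2 - n) * v r ^ 4) * r ^ 2) r := by
    intro r hr
    have h := (((hasDerivAt_id r).pow 2).mul (hd1 r hr)).mul (hd2 r hr)
    have hv : deriv (deriv v) r = v r + r ^ (2 - n) * v r ^ 3 - (2 / r) * deriv v r := by
      linarith [hode r hr]
    refine h.congr_deriv ?_
    simp only [Pi.mul_apply, Pi.pow_apply, id_eq, hv]
    field_simp
    ring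
  have hmono : MonotoneOn W (Set.Ioi 0) := by
    refine monotoneOn_of_deriv_nonneg (convex_Ioi 0)
      (fun r hr => (hWd r hr).continuousAt.continuousWithinAt)
      (fun r hr => (hWd r (by simpa using hr)).differentiableAt.differentiableWithinAt) ?_
    intro r hr
    have hr' : 0 < r := by simpa using hr
    rw [(hWd r hr').deriv]
    positivity
  have hzero : ∀ r > (0 : ℝ), W r = 0 := by
    intro r hr
    apply le_antisymm
    · refine ge_of_tendsto hbdryTop ?_
      filter_upwards [eventually_ge_atTop r] with s hs
      exact hmono hr (lt_of_lt_of_le hr hs) hs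
    · refine le_of_tendsto hbdry0 ?_
      filter_upwards [Ioo_mem_nhdsGT hr] with s hs
      exact hmono hs.1 hr hs.2.le
  intro r hr
  have hW0 : HasDerivAt W 0 r := (hasDerivAt_const r (0 : ℝ)).congr_of_eventuallyEq
    (by filter_upwards [Ioi_mem_nhds hr] with s hs using hzero s hs)
  have heq := (hWd r hr).unique hW0
  have hsum : deriv v r ^ 2 + v r ^ 2 + r ^ (2 - n) * v r ^ 4 = 0 :=
    (mul_eq_zero.1 heq).resolve_right (by positivity)
  have h4 : 0 ≤ r ^ (2 - n) * v r ^ 4 := by positivity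
  have hv2 : v r ^ 2 = 0 := by nlinarith [sq_nonneg (deriv v r), sq_nonneg (v r)]
  exact pow_eq_zero_iff (two_ne_zero) |>.1 hv2
end

section
/- Let n be real with 0 < n < 3 and let Q be a ground state: Q ∈ C²((0,∞), ℝ), Q(r) > 0 for all r > 0, Q''(r) + (2/r)Q'(r) = Q(r) − r^{2−n}Q(r)³ for all r > 0, Q bounded on (0,1], and Q(r) → 0 as r → ∞. Then the limit q_n := lim_{r→0⁺} Q(r) exists and is strictly positive. -/
/-!
Put `u(r) = r Q(r)`. The equation becomes `u'' = r Q − r^{3−n} Q³`, and since `n < 3` both powers of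
`r` are at most `1` on `(0,1]`. So if `0 < Q ≤ M` on `(0,1]` and `Q ≤ S` on `(0,R]` with `R ≤ 1`, then
`|u''| ≤ K S` on `(0,R]` with `K = 1 + M²`. Hence `u'` is Lipschitz and has a limit `a` at `0`, with
`|u'(r) − a| ≤ K S r`; as `u(0⁺) = 0`, a second integration gives `|Q(r) − a| ≤ K S r`
(`abs_sub_le_of_second_deriv_bound`). In particular `Q → a ≥ 0`.

If `a = 0`, take `R = 1/(2K)` and `S = sup_{(0,R]} Q`: the estimate gives `Q ≤ S/2` on `(0,R]`, so
`S ≤ 0`, contradicting `Q > 0`.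
-/

open Filter

/-- A function with bounded derivative on `(0,R]` has a limit `a` at `0⁺`, with a linear rate. -/
lemma exists_abs_sub_le_of_deriv_bound {f f' : ℝ → ℝ} {R B : ℝ} (hB : 0 ≤ B)
    (hf : ∀ x ∈ Set.Ioc 0 R, HasDerivAt f (f' x) x)
    (hb : ∀ x ∈ Set.Ioc 0 R, |f' x| ≤ B) :
    ∃ a, ∀ x ∈ Set.Ioc 0 R, |f x - a| ≤ B * x := by
  lift B to NNReal using hB
  have hL : LipschitzOnWith B f (Set.Ioc 0 R) :=
    (convex_Ioc 0 R).lipschitzOnWith_of_nnnorm_hasDerivWithin_le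
      (fun x hx => (hf x hx).hasDerivWithinAt)
      (fun x hx => by
        rw [← NNReal.coe_le_coe, coe_nnnorm, Real.norm_eq_abs]
        exact hb x hx)
  -- The limit is the value at `0` of a Lipschitz extension to the whole line.
  obtain ⟨g, hg, hfg⟩ := hL.extend_real
  refine ⟨g 0, fun x hx => ?_⟩
  have h := hg.dist_le_mul x 0
  rw [Real.dist_eq, Real.dist_eq, ← hfg hx, sub_zero, abs_of_pos hx.1] at h
  exact h

lemma tendsto_of_abs_sub_le {f : ℝ → ℝ} {a R B : ℝ} (hR : 0 < R)
    (h : ∀ x ∈ Set.Ioc 0 R, |f x - a| ≤ B * x) :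
    Tendsto f (nhdsWithin 0 (Set.Ioi 0)) (nhds a) := by
  rw [tendsto_iff_dist_tendsto_zero]
  have h0 : Tendsto (fun x : ℝ => B * x) (nhdsWithin 0 (Set.Ioi 0)) (nhds 0) := by
    have : Tendsto (fun x : ℝ => B * x) (nhds 0) (nhds (B * 0)) :=
      (continuous_const.mul continuous_id).tendsto 0
    rw [mul_zero] at this
    exact this.mono_left nhdsWithin_le_nhds
  refine squeeze_zero' (Eventually.of_forall fun _ => dist_nonneg) ?_ h0
  filter_upwards [Ioc_mem_nhdsGT hR] with x hx
  exact h x hx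

/-- If `u = x Q` with `Q` bounded on `(0,R]` and `|u''| ≤ B`, integrating twice from `0` shows that
`Q = u / x` converges at `0⁺`, with a linear rate. -/
lemma abs_sub_le_of_second_deriv_bound {Q p w : ℝ → ℝ} {R B M : ℝ} (hB : 0 ≤ B)
    (hu : ∀ x ∈ Set.Ioc 0 R, HasDerivAt (fun x => x * Q x) (p x) x)
    (hp : ∀ x ∈ Set.Ioc 0 R, HasDerivAt p (w x) x)
    (hw : ∀ x ∈ Set.Ioc 0 R, |w x| ≤ B)
    (hQ : ∀ x ∈ Set.Ioc 0 R, |Q x| ≤ M) :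
    ∃ a, ∀ x ∈ Set.Ioc 0 R, |Q x - a| ≤ B * x := by
  obtain ⟨a, ha⟩ := exists_abs_sub_le_of_deriv_bound hB hp hw
  refine ⟨a, fun r hr => ?_⟩
  have hsub : ∀ x ∈ Set.Ioc 0 r, x ∈ Set.Ioc 0 R := fun x hx => ⟨hx.1, hx.2.trans hr.2⟩
  obtain ⟨b, hb⟩ := exists_abs_sub_le_of_deriv_bound (f := fun x => x * Q x - x * a)
    (f' := fun x => p x - a) (R := r) (B := B * r) (mul_nonneg hB hr.1.le)
    (fun x hx => by
      simpa using (hu x (hsub x hx)).fun_sub ((hasDerivAt_id x).mul_const a))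
    (fun x hx => (ha x (hsub x hx)).trans (mul_le_mul_of_nonneg_left hx.2 hB))
  -- Since `Q` is bounded, `x Q - x a` tends to `0`, which forces its limit `b` to vanish.
  have hb0 : b = 0 := by
    refine tendsto_nhds_unique (tendsto_of_abs_sub_le hr.1 hb)
      (tendsto_of_abs_sub_le (B := M + |a|) hr.1 fun x hx => ?_)
    have h1 := hQ x (hsub x hx)
    have h2 : x * Q x - x * a - 0 = (Q x - a) * x := by ring
    rw [h2, abs_mul, abs_of_pos hx.1]
    exact mul_le_mul_of_nonneg_right ((abs_sub _ _).trans (by linarith)) hx.1.le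
  have h := hb r ⟨hr.1, le_rfl⟩
  have h2 : r * Q r - r * a - b = (Q r - a) * r := by rw [hb0]; ring
  rw [h2, abs_mul, abs_of_pos hr.1] at h
  exact le_of_mul_le_mul_right h hr.1

/-- A ground state `Q` (positive `C²` solution of
`Q'' + (2/r)Q' = Q − r^{2−n}Q³` on `(0,∞)`, bounded on `(0,1]`, tending to `0` at `∞`)
has a strictly positive limit `q_n = lim_{r→0⁺} Q(r)`. -/
theorem ground_state_limit_at_zero (n : ℝ) (hn0 : 0 < n) (hn3 : n < 3)
    (Q : ℝ → ℝ) (hQreg : ContDiffOn ℝ 2 Q (Set.Ioi 0))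
    (hQpos : ∀ r > (0 : ℝ), 0 < Q r)
    (hQode : ∀ r > (0 : ℝ),
      deriv (deriv Q) r + (2 / r) * deriv Q r = Q r - r ^ (2 - n) * Q r ^ 3)
    (hQbdd : ∃ M : ℝ, ∀ r ∈ Set.Ioc (0 : ℝ) 1, |Q r| ≤ M)
    (hQinf : Tendsto Q atTop (nhds 0)) :
    ∃ qn > (0 : ℝ), Tendsto Q (nhdsWithin 0 (Set.Ioi 0)) (nhds qn) := by
  obtain ⟨M, hM⟩ := hQbdd
  have hd1 : ∀ x > (0 : ℝ), HasDerivAt Q (deriv Q x) x := fun x hx =>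
    ((hQreg.differentiableOn (by norm_num)).differentiableAt (Ioi_mem_nhds hx)).hasDerivAt
  have hreg' : ContDiffOn ℝ 1 (deriv Q) (Set.Ioi 0) :=
    hQreg.deriv_of_isOpen isOpen_Ioi (by norm_num)
  have hd2 : ∀ x > (0 : ℝ), HasDerivAt (deriv Q) (deriv (deriv Q) x) x := fun x hx =>
    ((hreg'.differentiableOn (by norm_num)).differentiableAt (Ioi_mem_nhds hx)).hasDerivAt
  set K : ℝ := 1 + M ^ 2 with hK
  have hK1 : 1 ≤ K := by nlinarith [sq_nonneg M]
  have key : ∀ R S : ℝ, 0 < R → R ≤ 1 → (∀ r ∈ Set.Ioc 0 R, Q r ≤ S) →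
      ∃ a, ∀ r ∈ Set.Ioc 0 R, |Q r - a| ≤ K * S * r := by
    intro R S hR hR1 hS
    have hS0 : 0 ≤ S := (hQpos R hR).le.trans (hS R ⟨hR, le_rfl⟩)
    refine abs_sub_le_of_second_deriv_bound (p := fun x => Q x + x * deriv Q x)
      (w := fun x => x * Q x - x ^ (3 - n) * Q x ^ 3) (M := M) (by positivity) ?_ ?_ ?_ ?_
    · intro x hx
      simpa using (hasDerivAt_id x).fun_mul (hd1 x hx.1)
    · intro x hx
      have hx0 : x ≠ 0 := hx.1.ne'
      have h := (hd1 x hx.1).fun_add ((hasDerivAt_id x).fun_mul (hd2 x hx.1))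
      refine h.congr_deriv ?_
      have hpow : x ^ (3 - n) = x * x ^ (2 - n) := by
        rw [show 3 - n = 1 + (2 - n) by ring, Real.rpow_add hx.1, Real.rpow_one]
      have hode := hQode x hx.1
      have : x * (deriv (deriv Q) x + (2 / x) * deriv Q x)
          = 2 * deriv Q x + x * deriv (deriv Q) x := by
        field_simp
        ring
      rw [hode] at this
      simp only [id_eq]
      rw [hpow]
      linarith
    · intro x hx
      have hq := hQpos x hx.1
      have hx1 : x ≤ 1 := hx.2.trans hR1
      have hqM : Q x ≤ M := (le_abs_self _).trans (hM x ⟨hx.1, hx1⟩)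
      have hp0 : 0 ≤ x ^ (3 - n) := Real.rpow_nonneg hx.1.le _
      have hp1 : x ^ (3 - n) ≤ 1 := Real.rpow_le_one hx.1.le hx1 (by linarith)
      have h1 : x * Q x ≤ Q x := mul_le_of_le_one_left hq.le hx1
      have h2 : x ^ (3 - n) * Q x ^ 3 ≤ Q x ^ 3 := mul_le_of_le_one_left (by positivity) hp1
      have h3 : Q x ^ 3 ≤ M ^ 2 * Q x := by
        have : Q x ^ 2 ≤ M ^ 2 := pow_le_pow_left₀ hq.le hqM 2
        nlinarith
      have h4 : K * Q x ≤ K * S := mul_le_mul_of_nonneg_left (hS x hx) (by linarith)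
      have h5 : 0 ≤ x * Q x := mul_nonneg hx.1.le hq.le
      have h6 : 0 ≤ x ^ (3 - n) * Q x ^ 3 := by positivity
      have h7 : K * Q x = Q x + M ^ 2 * Q x := by rw [hK]; ring
      have h8 : 0 ≤ M ^ 2 * Q x := by positivity
      rw [abs_le]
      constructor <;> linarith
    · intro x hx
      exact hM x ⟨hx.1, hx.2.trans hR1⟩
  obtain ⟨a, ha⟩ := key 1 M one_pos le_rfl fun r hr => (le_abs_self _).trans (hM r hr)
  have hlim := tendsto_of_abs_sub_le one_pos ha
  have ha0 : 0 ≤ a := ge_of_tendsto hlim <| by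
    filter_upwards [self_mem_nhdsWithin] with x hx
    exact (hQpos x hx).le
  refine ⟨a, lt_of_le_of_ne ha0 fun h0 => ?_, hlim⟩
  -- With `K R = 1/2`, the estimate on `(0,R]` halves the supremum of `Q` there.
  set R : ℝ := 1 / (2 * K) with hRdef
  have hR : 0 < R := by positivity
  have hKR : K * R = 1 / 2 := by rw [hRdef]; field_simp
  have hR1 : R ≤ 1 := by nlinarith
  have hbdd : BddAbove (Q '' Set.Ioc 0 R) := ⟨M, by
    rintro _ ⟨x, hx, rfl⟩
    exact (le_abs_self _).trans (hM x ⟨hx.1, hx.2.trans hR1⟩)⟩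
  set S := sSup (Q '' Set.Ioc 0 R) with hSdef
  have hS : ∀ r ∈ Set.Ioc 0 R, Q r ≤ S := fun r hr => le_csSup hbdd ⟨r, hr, rfl⟩
  have hSpos : 0 < S := (hQpos R hR).trans_le (hS R ⟨hR, le_rfl⟩)
  obtain ⟨a', ha'⟩ := key R S hR hR1 hS
  have haa : a' = 0 :=
    (tendsto_nhds_unique (tendsto_of_abs_sub_le hR ha') hlim).trans h0.symm
  have hle : S ≤ S / 2 := by
    refine csSup_le ⟨Q R, R, ⟨hR, le_rfl⟩, rfl⟩ ?_
    rintro _ ⟨x, hx, rfl⟩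
    have h := ha' x hx
    rw [haa, sub_zero] at h
    have h2 : K * S * x ≤ K * S * R := mul_le_mul_of_nonneg_left hx.2 (by positivity)
    have h3 : K * S * R = S / 2 := by rw [mul_right_comm, hKR]; ring
    linarith [le_abs_self (Q x)]
  linarith
end
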